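/- arXiv:1007.3395 — 2 statements merged into one kernel-verified Lean document; each statement's English description precedes it below -/
import Mathlib

section
/- Let n > 1. Under the hypotheses below (μ, ν symmetrically suitable Borel probability measures on Sⁿ, γ an optimal coupling of (μ, ν) for the quadratic cost, and t⁺, t⁻ the Gangbo–McCann outer and inner maps), the outer optimal map t⁺ is locally Hölder continuous with exponent 1/(4n−1) on the non-degenerate univalent set S₁ := {x ∈ Sⁿ : t⁺(x) = t⁻(x) and x·t⁺(x) > 0}; that is, every point of S₁ has a relative neighborhood U ⊂ S₁ and a constant C such that |t⁺(x₁) − t⁺(x₀)| ≤ C|x₁ − x₀|^{1/(4n−1)} for all x₀, x₁ ∈ U. -/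
/-!
The support of an optimal plan `γ` is monotone (`support_monotone`), and it contains `(x, t⁺ x)`
for every univalent `x` (`mem_support_of_univalent`). Let `x₀, x₁ ∈ S₁` be close to a given point
of `S₁`, let `y₀ = t⁺ x₀`, `y₁ = t⁺ x₁`, `r = |y₁ - y₀|`, `δ = |x₁ - x₀|`, and suppose `δ < r`.

Project the sphere along `x₀`. A point `y` of the sphere that projects within `η` of the middle
half of the projected chord has the form `(1 - θ) y₀ + θ y₁ + e + s x₀`, where `|e| ≲ η` and, by
strict convexity of the sphere, `s` is at least a multiple of `r²` (`chord_height`). If `(x, y)`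
lies in the support, monotonicity against `(x₀, y₀)` and `(x₁, y₁)` gives
`s |x - x₀|² / 2 ≤ |e| |x - x₀| + C r δ`, because `⟪x₀, x - x₀⟫ = -|x - x₀|² / 2` on the sphere.
With `η` of order `r ^ (3/2) δ ^ (1/2)` this yields `|x - x₀| ≤ C (δ / r) ^ (1/2)`
(`source_near`). No restriction on `x` is needed, so all the mass that `ν` gives to the tube over
the chord comes from this ball.

The tube projects onto a box of length at least a multiple of `r` (here `x₀ · y₀` and `x₀ · y₁` must
stay away from `0`) and of width `2η` in the other `n - 1` directions, while the ball has
`μ`-measure at most `C (δ / r) ^ (n/2)`. Comparing the two (`mass_comparison`) gives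
`r η ^ (n-1) ≤ C (δ / r) ^ (n/2)`, that is, `r ^ (4n-1) ≤ C δ` (`pow_le_of_mass_comparison`).
-/

open MeasureTheory Metric Set
open scoped RealInnerProductSpace ENNReal NNReal

noncomputable section

/-- Euclidean space `ℝ^{n+1}`. -/
abbrev Euc (n : ℕ) := EuclideanSpace ℝ (Fin (n + 1))

/-- The unit sphere `Sⁿ ⊂ ℝ^{n+1}`. -/
def unitSphere (n : ℕ) : Set (Euc n) := Metric.sphere (0 : Euc n) 1

/-- `σ`: the `n`-dimensional Hausdorff measure restricted to the unit sphere. -/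
def sphereMeasure (n : ℕ) : Measure (Euc n) :=
  (μH[(n : ℝ)]).restrict (unitSphere n)

/-- Borel probability measures `μ, ν` on `Sⁿ` are symmetrically suitable if there is `ε > 0`
with `ε·σ ≤ μ ≤ ε⁻¹·σ` and `ε·σ ≤ ν ≤ ε⁻¹·σ`. -/
def SymmetricallySuitable (n : ℕ) (μ ν : Measure (Euc n)) : Prop :=
  IsProbabilityMeasure μ ∧ IsProbabilityMeasure ν ∧
  ∃ ε : ℝ≥0∞, 0 < ε ∧ ε ≠ ⊤ ∧
    ε • sphereMeasure n ≤ μ ∧ μ ≤ ε⁻¹ • sphereMeasure n ∧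
    ε • sphereMeasure n ≤ ν ∧ ν ≤ ε⁻¹ • sphereMeasure n

/-- A coupling of `(μ, ν)`: a Borel probability measure on the product whose marginals
are `μ` and `ν`. -/
def IsCoupling (n : ℕ) (μ ν : Measure (Euc n)) (γ : Measure (Euc n × Euc n)) : Prop :=
  IsProbabilityMeasure γ ∧ γ.map Prod.fst = μ ∧ γ.map Prod.snd = ν

/-- The quadratic transport cost of a plan `γ`. -/
def transportCost (n : ℕ) (γ : Measure (Euc n × Euc n)) : ℝ≥0∞ :=
  ∫⁻ p, ENNReal.ofReal (‖p.1 - p.2‖ ^ 2) ∂γ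

/-- `γ` is an optimal coupling of `(μ, ν)` for the quadratic cost. -/
def IsOptimalCoupling (n : ℕ) (μ ν : Measure (Euc n)) (γ : Measure (Euc n × Euc n)) : Prop :=
  IsCoupling n μ ν γ ∧ ∀ γ' : Measure (Euc n × Euc n), IsCoupling n μ ν γ' →
    transportCost n γ ≤ transportCost n γ'

/-- The Gangbo–McCann structure: `t⁺ : Sⁿ → Sⁿ` is a homeomorphism (a continuous bijection of
the compact sphere) and `t⁻ : Sⁿ → Sⁿ` is continuous, `γ` is concentrated on the union of their
graphs, `t⁺(x) = t⁻(x)` implies `x·t⁺(x) ≥ 0`, and at every bivalent point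
`t⁺(x) − t⁻(x) = λ(x)x` with `λ(x) > 0`, `x·t⁺(x) > 0` and `x·t⁻(x) < 0`. -/
def GangboMcCannMaps (n : ℕ) (γ : Measure (Euc n × Euc n))
    (tp tm : Euc n → Euc n) : Prop :=
  ContinuousOn tp (unitSphere n) ∧ BijOn tp (unitSphere n) (unitSphere n) ∧
  ContinuousOn tm (unitSphere n) ∧ MapsTo tm (unitSphere n) (unitSphere n) ∧
  γ {p : Euc n × Euc n | p.2 ≠ tp p.1 ∧ p.2 ≠ tm p.1} = 0 ∧
  (∀ x ∈ unitSphere n, tp x = tm x → 0 ≤ ⟪x, tp x⟫) ∧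
  (∀ x ∈ unitSphere n, tp x ≠ tm x →
    (∃ l : ℝ, 0 < l ∧ tp x - tm x = l • x) ∧ 0 < ⟪x, tp x⟫ ∧ ⟪x, tm x⟫ < 0)

/-- `f` is locally Hölder with exponent `α` on `A`: every point of `A` has a relative
neighborhood `U ⊆ A` and a constant `C` with `|f x₁ − f x₀| ≤ C|x₁ − x₀|^α` on `U`. -/
def LocallyHolderOn (n : ℕ) (f : Euc n → Euc n) (A : Set (Euc n)) (α : ℝ) : Prop :=
  ∀ x ∈ A, ∃ U ∈ nhdsWithin x A, U ⊆ A ∧ ∃ C : ℝ,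
    ∀ x₀ ∈ U, ∀ x₁ ∈ U, ‖f x₁ - f x₀‖ ≤ C * ‖x₁ - x₀‖ ^ α

/-! ### Monotonicity of the support of an optimal plan -/

/-- The support of an optimal plan of finite cost is monotone.  If `p, q` in the support violated
monotonicity, so would all pairs in `A × B` for neighbourhoods `A ∋ p`, `B ∋ q`, and exchanging
the targets of a small amount of mass between `A` and `B` would lower the cost. -/
lemma support_monotone {n : ℕ} {μ ν : Measure (Euc n)} {γ : Measure (Euc n × Euc n)}
    (hopt : IsOptimalCoupling n μ ν γ) (hfin : transportCost n γ ≠ ⊤)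
    {p q : Euc n × Euc n} (hp : p ∈ γ.support) (hq : q ∈ γ.support) :
    0 ≤ ⟪p.1 - q.1, p.2 - q.2⟫ := by
  by_contra! hneg
  obtain ⟨⟨hγ, h1, h2⟩, hmin⟩ := hopt
  have hWo : IsOpen {z : (Euc n × Euc n) × (Euc n × Euc n) |
      ⟪z.1.1 - z.2.1, z.1.2 - z.2.2⟫ < 0} :=
    isOpen_lt (by fun_prop) continuous_const
  obtain ⟨A, B, hA, hB, hpA, hqB, hAB⟩ := isOpen_prod_iff.1 hWo p q hneg
  have hApos : 0 < γ A := (Measure.mem_support_iff_forall p).1 hp A (hA.mem_nhds hpA)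
  have hBpos : 0 < γ B := (Measure.mem_support_iff_forall q).1 hq B (hB.mem_nhds hqB)
  -- `P` couples the mass in `A` with the mass in `B`; its factors are the mass to be rerouted.
  set P : Measure ((Euc n × Euc n) × (Euc n × Euc n)) :=
    (2⁻¹ : ℝ≥0∞) • (γ.restrict A).prod (γ.restrict B) with hP
  have hPfin : IsFiniteMeasure P := by
    rw [hP]; exact Measure.smul_finite _ (by simp)
  have hPfst : P.map Prod.fst = (2⁻¹ * γ B) • γ.restrict A := by
    rw [hP, Measure.map_smul, Measure.map_fst_prod, smul_smul]
    simp
  have hPsnd : P.map Prod.snd = (2⁻¹ * γ A) • γ.restrict B := by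
    rw [hP, Measure.map_smul, Measure.map_snd_prod, smul_smul]
    simp
  have hhalf : ∀ (a : ℝ≥0∞) (S : Set (Euc n × Euc n)), a ≤ 1 →
      (2⁻¹ * a) • γ.restrict S ≤ (2⁻¹ : ℝ≥0∞) • γ := by
    intro a S ha
    refine Measure.le_iff.2 fun s _ => ?_
    simp only [Measure.smul_apply, smul_eq_mul]
    refine mul_le_mul' ?_ (Measure.restrict_apply_le _ _)
    calc (2⁻¹ : ℝ≥0∞) * a ≤ 2⁻¹ * 1 := by gcongr
      _ = 2⁻¹ := mul_one _
  have hle : P.map Prod.fst + P.map Prod.snd ≤ γ := by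
    rw [hPfst, hPsnd]
    calc _ ≤ (2⁻¹ : ℝ≥0∞) • γ + (2⁻¹ : ℝ≥0∞) • γ :=
          add_le_add (hhalf _ _ prob_le_one) (hhalf _ _ prob_le_one)
      _ = γ := by rw [← add_smul, ENNReal.inv_two_add_inv_two, one_smul]
  set β := γ - (P.map Prod.fst + P.map Prod.snd) with hβ
  have hdec : β + (P.map Prod.fst + P.map Prod.snd) = γ := Measure.sub_add_cancel_of_le hle
  have m1 : Measurable fun z : (Euc n × Euc n) × (Euc n × Euc n) => (z.1.1, z.2.2) := by fun_prop
  have m2 : Measurable fun z : (Euc n × Euc n) × (Euc n × Euc n) => (z.2.1, z.1.2) := by fun_prop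
  set γ' := β + (P.map (fun z => (z.1.1, z.2.2)) + P.map (fun z => (z.2.1, z.1.2))) with hγ'
  have hf1 : γ'.map Prod.fst = μ := by
    rw [← h1, ← hdec, hγ']
    rw [Measure.map_add _ _ measurable_fst, Measure.map_add _ _ measurable_fst,
      Measure.map_add _ _ measurable_fst, Measure.map_add _ _ measurable_fst,
      Measure.map_map measurable_fst m1, Measure.map_map measurable_fst m2,
      Measure.map_map measurable_fst measurable_fst, Measure.map_map measurable_fst measurable_snd]
    rfl
  have hf2 : γ'.map Prod.snd = ν := by
    rw [← h2, ← hdec, hγ']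
    rw [Measure.map_add _ _ measurable_snd, Measure.map_add _ _ measurable_snd,
      Measure.map_add _ _ measurable_snd, Measure.map_add _ _ measurable_snd,
      Measure.map_map measurable_snd m1, Measure.map_map measurable_snd m2,
      Measure.map_map measurable_snd measurable_fst, Measure.map_map measurable_snd measurable_snd,
      add_comm (P.map (Prod.snd ∘ fun z : (Euc n × Euc n) × (Euc n × Euc n) => (z.1.1, z.2.2)))]
    rfl
  have hprob : IsProbabilityMeasure γ' := by
    constructor
    have : γ'.map Prod.fst univ = γ.map Prod.fst univ := by rw [hf1, h1]
    rw [Measure.map_apply measurable_fst MeasurableSet.univ,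
      Measure.map_apply measurable_fst MeasurableSet.univ] at this
    simpa using this
  have hcost := hmin γ' ⟨hprob, hf1, hf2⟩
  have mc : Measurable fun p : Euc n × Euc n => ENNReal.ofReal (‖p.1 - p.2‖ ^ 2) := by fun_prop
  have e1 : transportCost n γ = transportCost n β + ∫⁻ z, (ENNReal.ofReal (‖z.1.1 - z.1.2‖ ^ 2) +
      ENNReal.ofReal (‖z.2.1 - z.2.2‖ ^ 2)) ∂P := by
    conv_lhs => rw [← hdec]
    rw [transportCost, transportCost, lintegral_add_measure, lintegral_add_measure,
      lintegral_map mc measurable_fst, lintegral_map mc measurable_snd,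
      lintegral_add_left (by fun_prop)]
  have e2 : transportCost n γ' = transportCost n β + ∫⁻ z, (ENNReal.ofReal (‖z.1.1 - z.2.2‖ ^ 2) +
      ENNReal.ofReal (‖z.2.1 - z.1.2‖ ^ 2)) ∂P := by
    rw [hγ', transportCost, transportCost, lintegral_add_measure, lintegral_add_measure,
      lintegral_map mc m1, lintegral_map mc m2, lintegral_add_left (by fun_prop)]
  have hPae : ∀ᵐ z ∂P, z ∈ A ×ˢ B := by
    rw [hP, Measure.prod_restrict]
    exact Measure.ae_smul_measure (ae_restrict_mem (hA.measurableSet.prod hB.measurableSet)) _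
  have hP0 : P ≠ 0 := by
    rw [← Measure.measure_univ_ne_zero, hP, Measure.smul_apply, ← univ_prod_univ,
      Measure.prod_prod]
    simp [hApos.ne', hBpos.ne']
  have hpt : ∀ᵐ z ∂P, ENNReal.ofReal (‖z.1.1 - z.2.2‖ ^ 2) + ENNReal.ofReal (‖z.2.1 - z.1.2‖ ^ 2)
      < ENNReal.ofReal (‖z.1.1 - z.1.2‖ ^ 2) + ENNReal.ofReal (‖z.2.1 - z.2.2‖ ^ 2) := by
    filter_upwards [hPae] with z hz
    have := hAB hz
    rw [mem_ofPred_eq] at this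
    rw [← ENNReal.ofReal_add (by positivity) (by positivity),
      ← ENNReal.ofReal_add (by positivity) (by positivity),
      ENNReal.ofReal_lt_ofReal_iff_of_nonneg (by positivity)]
    simp only [norm_sub_sq_real, inner_sub_left, inner_sub_right] at this ⊢
    linarith
  have hβfin : transportCost n β ≠ ⊤ := fun h => hfin (by rw [e1, h]; simp)
  have hIfin : ∫⁻ z, (ENNReal.ofReal (‖z.1.1 - z.1.2‖ ^ 2) +
      ENNReal.ofReal (‖z.2.1 - z.2.2‖ ^ 2)) ∂P ≠ ⊤ := fun h => hfin (by rw [e1, h]; simp)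
  have hlt := lintegral_strict_mono hP0 (by fun_prop)
    (ne_top_of_le_ne_top hIfin (lintegral_mono_ae (hpt.mono fun _ h => h.le))) hpt
  rw [e1, e2] at hcost
  exact absurd hcost (not_le.2 (ENNReal.add_lt_add_left hβfin hlt))

/-! ### Hausdorff measure on the sphere in tangent coordinates -/

/-- The coordinates of `y` on the hyperplane orthogonal to `b 0`.  The target carries the sup norm,
for which `n`-dimensional Hausdorff measure is Lebesgue measure. -/
def tangentCoord {n : ℕ} (b : OrthonormalBasis (Fin (n + 1)) ℝ (Euc n)) (y : Euc n) :
    Fin n → ℝ := fun i => ⟪b i.succ, y⟫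

lemma norm_sq_eq_tangentCoord {n : ℕ} (b : OrthonormalBasis (Fin (n + 1)) ℝ (Euc n)) (y : Euc n) :
    ‖y‖ ^ 2 = ⟪b 0, y⟫ ^ 2 + ∑ i, tangentCoord b y i ^ 2 := by
  have h := b.sum_sq_norm_inner_right y
  rw [← h, Fin.sum_univ_succ]
  simp [tangentCoord]

lemma tangentCoord_sub {n : ℕ} (b : OrthonormalBasis (Fin (n + 1)) ℝ (Euc n)) (y z : Euc n) :
    tangentCoord b (y - z) = tangentCoord b y - tangentCoord b z := by
  ext i; simp [tangentCoord, inner_sub_right]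

lemma lipschitzWith_tangentCoord {n : ℕ} (b : OrthonormalBasis (Fin (n + 1)) ℝ (Euc n)) :
    LipschitzWith 1 (tangentCoord b) := by
  refine LipschitzWith.of_dist_le_mul fun y z => ?_
  rw [dist_eq_norm, ← tangentCoord_sub, NNReal.coe_one, one_mul, dist_eq_norm,
    pi_norm_le_iff_of_nonneg (norm_nonneg _)]
  intro i
  have := norm_inner_le_norm (𝕜 := ℝ) (b i.succ) (y - z)
  simpa [tangentCoord] using this

lemma exists_orthonormalBasis_zero {n : ℕ} {x : Euc n} (hx : ‖x‖ = 1) :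
    ∃ b : OrthonormalBasis (Fin (n + 1)) ℝ (Euc n), b 0 = x := by
  have hv : Orthonormal ℝ (({0} : Set (Fin (n + 1))).domRestrict fun _ => x) := by
    refine ⟨fun _ => hx, fun i j hij => absurd (Subsingleton.elim i j) hij⟩
  obtain ⟨b, hb⟩ := hv.exists_orthonormalBasis_extension_of_card_eq (by simp)
  exact ⟨b, hb 0 rfl⟩

lemma exists_orthonormalBasis_zero_succ {n : ℕ} {x u : Euc n} (hx : ‖x‖ = 1) (hu : ‖u‖ = 1)
    (hxu : ⟪x, u⟫ = 0) (j : Fin n) :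
    ∃ b : OrthonormalBasis (Fin (n + 1)) ℝ (Euc n), b 0 = x ∧ b j.succ = u := by
  have hj : j.succ ≠ 0 := Fin.succ_ne_zero j
  have hv : Orthonormal ℝ (({0, j.succ} : Set (Fin (n + 1))).domRestrict
      fun i => if i = 0 then x else u) := by
    constructor
    · rintro ⟨i, rfl | rfl⟩ <;> simp [hx, hu, hj]
    · rintro ⟨i, rfl | rfl⟩ ⟨k, rfl | rfl⟩ hik <;>
        simp_all [real_inner_comm]
  obtain ⟨b, hb⟩ := hv.exists_orthonormalBasis_extension_of_card_eq (by simp)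
  exact ⟨b, by simpa using hb 0 (by simp), by simpa [hj] using hb j.succ (by simp)⟩

/-- The part of the upper hemisphere with pole `b 0` that projects into `T`. -/
def sphereLift {n : ℕ} (b : OrthonormalBasis (Fin (n + 1)) ℝ (Euc n)) (T : Set (Fin n → ℝ)) :
    Set (Euc n) := {y | ‖y‖ = 1 ∧ 0 ≤ ⟪b 0, y⟫ ∧ tangentCoord b y ∈ T}

lemma isClosed_sphereLift {n : ℕ} (b : OrthonormalBasis (Fin (n + 1)) ℝ (Euc n))
    {T : Set (Fin n → ℝ)} (hT : IsClosed T) : IsClosed (sphereLift b T) := by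
  have h1 : IsClosed {y : Euc n | ‖y‖ = 1} := isClosed_eq continuous_norm continuous_const
  have h2 : IsClosed {y : Euc n | 0 ≤ ⟪b 0, y⟫} := isClosed_le continuous_const (by fun_prop)
  exact h1.inter (h2.inter (hT.preimage (lipschitzWith_tangentCoord b).continuous))

/-- Orthogonal projection does not increase Hausdorff measure, so the lift of a subset of the unit
ball of the tangent hyperplane has at least the measure of that subset. -/
lemma volume_le_sphereLift {n : ℕ} (b : OrthonormalBasis (Fin (n + 1)) ℝ (Euc n))
    {T : Set (Fin n → ℝ)} (hT : ∀ t ∈ T, ∑ i, t i ^ 2 ≤ 1) :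
    volume T ≤ sphereMeasure n (sphereLift b T) := by
  have hsub : T ⊆ tangentCoord b '' sphereLift b T := by
    intro t ht
    have hs := hT t ht
    set y : Euc n := b.repr.symm
      (WithLp.toLp 2 (Fin.cons (Real.sqrt (1 - ∑ i, t i ^ 2)) t : Fin (n + 1) → ℝ)) with hy
    have hin : ∀ i, ⟪b i, y⟫ = (Fin.cons (Real.sqrt (1 - ∑ i, t i ^ 2)) t : Fin (n + 1) → ℝ) i := by
      intro i
      rw [← b.repr_apply_apply, hy, LinearIsometryEquiv.apply_symm_apply]
    have hc : tangentCoord b y = t := by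
      ext i; rw [tangentCoord, hin, Fin.cons_succ]
    refine ⟨y, ⟨?_, ?_, by rwa [hc]⟩, hc⟩
    · have h := norm_sq_eq_tangentCoord b y
      rw [hc, hin 0, Fin.cons_zero, Real.sq_sqrt (by linarith), sub_add_cancel] at h
      nlinarith [norm_nonneg y]
    · rw [hin 0, Fin.cons_zero]; exact Real.sqrt_nonneg _
  have h1 : volume T ≤ μH[(n : ℝ)] (sphereLift b T) := by
    have h2 := (lipschitzWith_tangentCoord b).hausdorffMeasure_image_le (Nat.cast_nonneg n)
      (sphereLift b T)
    have h3 := hausdorffMeasure_pi_real (ι := Fin n)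
    rw [Fintype.card_fin] at h3
    rw [h3] at h2
    simpa using (measure_mono hsub).trans h2
  refine h1.trans (le_of_eq ?_)
  rw [sphereMeasure, Measure.restrict_eq_self]
  intro y hy
  simpa [unitSphere] using hy.1

/-- Small spherical caps are Lipschitz graphs over the tangent hyperplane at their centre. -/
lemma sphereMeasure_closedBall_le {n : ℕ} {x : Euc n} (hx : ‖x‖ = 1) {R : ℝ} (hR0 : 0 ≤ R)
    (hR : R ≤ 1 / 2) :
    sphereMeasure n (closedBall x R) ≤ ENNReal.ofReal ((4 * n * R) ^ n) := by
  obtain ⟨b, hb⟩ := exists_orthonormalBasis_zero hx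
  set A := closedBall x R ∩ unitSphere n with hA
  have hAnorm : ∀ y ∈ A, ‖y‖ = 1 := fun y hy => by simpa [unitSphere] using hy.2
  have hAcoord : ∀ y ∈ A, ∀ i, |tangentCoord b y i| ≤ R := by
    intro y hy i
    have h0 : ⟪b i.succ, x⟫ = 0 := by
      rw [← hb]; exact b.orthonormal.2 (Fin.succ_ne_zero i)
    have h1 : tangentCoord b y i = ⟪b i.succ, y - x⟫ := by
      rw [inner_sub_right, h0, sub_zero]; rfl
    rw [h1]
    have h2 := abs_real_inner_le_norm (b i.succ) (y - x)
    have h3 : ‖y - x‖ ≤ R := by simpa [dist_eq_norm] using hy.1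
    rw [b.orthonormal.1, one_mul] at h2
    exact h2.trans h3
  have hAheight : ∀ y ∈ A, 1 / 2 ≤ ⟪b 0, y⟫ := by
    intro y hy
    have h3 : ‖y - x‖ ≤ R := by simpa [dist_eq_norm] using hy.1
    have h4 := norm_sub_sq_real y x
    rw [hAnorm y hy, hx, real_inner_comm] at h4
    rw [hb]
    nlinarith [norm_nonneg (y - x)]
  have hanti : ∀ y ∈ A, ∀ z ∈ A,
      dist y z ≤ ((2 * n : ℝ≥0) : ℝ) * dist (tangentCoord b y) (tangentCoord b z) := by
    intro y hy z hz
    set D := dist (tangentCoord b y) (tangentCoord b z) with hD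
    have hD0 : 0 ≤ D := dist_nonneg
    have hc : ∀ i, |tangentCoord b y i - tangentCoord b z i| ≤ D := fun i => by
      rw [← Real.dist_eq]; exact dist_le_pi_dist _ _ i
    have hs : ∑ i, tangentCoord b (y - z) i ^ 2 ≤ n * D ^ 2 := by
      calc ∑ i, tangentCoord b (y - z) i ^ 2 ≤ ∑ _i : Fin n, D ^ 2 := by
            refine Finset.sum_le_sum fun i _ => ?_
            rw [tangentCoord_sub, Pi.sub_apply, ← sq_abs]
            exact pow_le_pow_left₀ (abs_nonneg _) (hc i) 2
        _ = n * D ^ 2 := by simp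
    have hdiff : |⟪b 0, y⟫ - ⟪b 0, z⟫| ≤ n * D := by
      have h1 := norm_sq_eq_tangentCoord b y
      have h2 := norm_sq_eq_tangentCoord b z
      rw [hAnorm y hy] at h1
      rw [hAnorm z hz] at h2
      have h3 : |(⟪b 0, y⟫ - ⟪b 0, z⟫) * (⟪b 0, y⟫ + ⟪b 0, z⟫)| ≤ n * D := by
        have : (⟪b 0, y⟫ - ⟪b 0, z⟫) * (⟪b 0, y⟫ + ⟪b 0, z⟫) =
            -∑ i, (tangentCoord b y i ^ 2 - tangentCoord b z i ^ 2) := by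
          rw [Finset.sum_sub_distrib]; linarith
        rw [this, abs_neg]
        calc _ ≤ ∑ i, |tangentCoord b y i ^ 2 - tangentCoord b z i ^ 2| :=
              Finset.abs_sum_le_sum_abs _ _
          _ ≤ ∑ _i : Fin n, D := by
            refine Finset.sum_le_sum fun i _ => ?_
            rw [sq_sub_sq, abs_mul]
            have h4 := (abs_add_le (tangentCoord b y i) (tangentCoord b z i)).trans
              (add_le_add (hAcoord y hy i) (hAcoord z hz i))
            calc _ ≤ 1 * D := mul_le_mul (by linarith) (hc i) (abs_nonneg _) (by norm_num)
              _ = D := one_mul D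
          _ = n * D := by simp
      rw [abs_mul] at h3
      have h5 : 1 ≤ |⟪b 0, y⟫ + ⟪b 0, z⟫| :=
        le_trans (by linarith [hAheight y hy, hAheight z hz]) (le_abs_self _)
      nlinarith [abs_nonneg (⟪b 0, y⟫ - ⟪b 0, z⟫)]
    have hfin := norm_sq_eq_tangentCoord b (y - z)
    rw [inner_sub_right] at hfin
    have h6 : (⟪b 0, y⟫ - ⟪b 0, z⟫) ^ 2 ≤ (n * D) ^ 2 := sq_le_sq' (abs_le.1 hdiff).1 (abs_le.1 hdiff).2
    have hn : (n : ℝ) ≤ n ^ 2 := by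
      exact_mod_cast Nat.le_self_pow (by norm_num) n
    rw [dist_eq_norm]
    push_cast
    refine abs_le_of_sq_le_sq' ?_ (by positivity) |>.2
    nlinarith [mul_le_mul_of_nonneg_right hn (sq_nonneg D), sq_nonneg ((n : ℝ) * D)]
  have hinj : InjOn (tangentCoord b) A := by
    intro y hy z hz hyz
    have := hanti y hy z hz
    rw [hyz, dist_self, mul_zero] at this
    exact dist_le_zero.1 this
  have hlip : LipschitzOnWith (2 * n : ℝ≥0) (Function.invFunOn (tangentCoord b) A)
      (tangentCoord b '' A) := by
    refine LipschitzOnWith.of_dist_le_mul ?_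
    rintro _ ⟨y, hy, rfl⟩ _ ⟨z, hz, rfl⟩
    rw [hinj.leftInvOn_invFunOn hy, hinj.leftInvOn_invFunOn hz]
    exact hanti y hy z hz
  have himg : Function.invFunOn (tangentCoord b) A '' (tangentCoord b '' A) = A :=
    hinj.leftInvOn_invFunOn.image_image
  have h2 := hlip.hausdorffMeasure_image_le (Nat.cast_nonneg (α := ℝ) n)
  have h3 := hausdorffMeasure_pi_real (ι := Fin n)
  rw [Fintype.card_fin] at h3
  rw [h3, himg] at h2
  have h4 : volume (tangentCoord b '' A) ≤ ENNReal.ofReal ((2 * R) ^ n) := by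
    have : tangentCoord b '' A ⊆ closedBall 0 R := by
      rintro _ ⟨y, hy, rfl⟩
      rw [mem_closedBall_zero_iff, pi_norm_le_iff_of_nonneg hR0]
      exact hAcoord y hy
    have h5 := measure_mono (μ := volume) this
    rwa [Real.volume_pi_closedBall _ hR0, Fintype.card_fin] at h5
  rw [sphereMeasure, Measure.restrict_apply measurableSet_closedBall]
  refine h2.trans ?_
  calc _ ≤ ((2 * n : ℝ≥0) : ℝ≥0∞) ^ (n : ℝ) * ENNReal.ofReal ((2 * R) ^ n) := by gcongr
    _ = ENNReal.ofReal ((4 * n * R) ^ n) := by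
      rw [ENNReal.rpow_natCast, ← ENNReal.ofReal_coe_nnreal, ← ENNReal.ofReal_pow (by positivity),
        ← ENNReal.ofReal_mul (by positivity), ← mul_pow]
      push_cast
      ring_nf

/-! ### Chords of the sphere and monotone pairs -/

/-- Points of a chord of the sphere lie inside it by an amount quadratic in the chord length. -/
lemma norm_sq_chord {E : Type*} [NormedAddCommGroup E] [InnerProductSpace ℝ E] {y₀ y₁ : E}
    (h₀ : ‖y₀‖ = 1) (h₁ : ‖y₁‖ = 1) (θ : ℝ) :
    ‖(1 - θ) • y₀ + θ • y₁‖ ^ 2 = 1 - θ * (1 - θ) * ‖y₁ - y₀‖ ^ 2 := by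
  have h3 := norm_sub_sq_real y₁ y₀
  rw [norm_add_sq_real, norm_smul, norm_smul, mul_pow, mul_pow, Real.norm_eq_abs, Real.norm_eq_abs,
    sq_abs, sq_abs, inner_smul_left, inner_smul_right]
  rw [h₀, h₁] at *
  simp only [conj_trivial]
  rw [h3, real_inner_comm]
  ring

lemma chord_perturb {E : Type*} [NormedAddCommGroup E] [InnerProductSpace ℝ E] {m e : E} {ρ : ℝ}
    (hm : ‖m‖ ≤ 1) (he : ‖e‖ ≤ ρ) (hρ : ρ ≤ 1) :
    |2 * ⟪m, e⟫ + ‖e‖ ^ 2| ≤ 3 * ρ := by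
  have h := abs_le.1 (abs_real_inner_le_norm m e)
  have h2 : ‖m‖ * ‖e‖ ≤ ρ := by nlinarith [norm_nonneg e, norm_nonneg m]
  rw [abs_le]
  constructor <;> nlinarith [norm_nonneg e, norm_nonneg m]

/-- A point `y` of the sphere lying above a chord, up to a small tangential error `e`, lies above it
by an amount `s` comparable to the squared length of the chord. -/
lemma chord_height {E : Type*} [NormedAddCommGroup E] [InnerProductSpace ℝ E]
    {x₀ y₀ y₁ e y : E} {c r s θ : ℝ}
    (hx₀ : ‖x₀‖ = 1) (hy₀ : ‖y₀‖ = 1) (hy₁ : ‖y₁‖ = 1) (hc : 0 < c)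
    (hc₀ : c ≤ ⟪x₀, y₀⟫) (hc₁ : c ≤ ⟪x₀, y₁⟫) (hr : r = ‖y₁ - y₀‖) (hr0 : 0 < r)
    (hθ₀ : 1 / 4 ≤ θ) (hθ₁ : θ ≤ 3 / 4) (he : ‖e‖ ≤ r ^ 2 / 64) (hxe : ⟪x₀, e⟫ = 0)
    (hy : ‖y‖ = 1) (hxy : 0 ≤ ⟪x₀, y⟫) (hye : y = (1 - θ) • y₀ + θ • y₁ + e + s • x₀) :
    r ^ 2 / 16 ≤ s ∧ s ≤ r / c ∧ ‖y - y₁‖ ≤ 3 * r / c := by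
  set m := (1 - θ) • y₀ + θ • y₁ with hm
  have hr2 : r ≤ 2 := by
    rw [hr]; refine (norm_sub_le _ _).trans ?_; rw [hy₀, hy₁]; norm_num
  have hle1 : ∀ z : E, ‖z‖ = 1 → ⟪x₀, z⟫ ≤ 1 := fun z hz => by
    have := real_inner_le_norm x₀ z
    rwa [hx₀, hz, one_mul] at this
  have hmn : ‖m‖ ^ 2 = 1 - θ * (1 - θ) * r ^ 2 := by rw [hr]; exact norm_sq_chord hy₀ hy₁ θ
  have hθl : 3 / 16 ≤ θ * (1 - θ) := by nlinarith
  have hθu : θ * (1 - θ) ≤ 1 / 4 := by nlinarith [sq_nonneg (θ - 1 / 2)]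
  have hm1 : ‖m‖ ≤ 1 := by
    nlinarith [norm_nonneg m, mul_nonneg (show (0 : ℝ) ≤ θ * (1 - θ) by linarith) (sq_nonneg r)]
  have hma : ⟪x₀, m⟫ = (1 - θ) * ⟪x₀, y₀⟫ + θ * ⟪x₀, y₁⟫ := by
    rw [hm, inner_add_right, inner_smul_right, inner_smul_right]
  have ha : c ≤ ⟪x₀, m⟫ := by rw [hma]; nlinarith only [hc₀, hc₁, hθ₀, hθ₁]
  have hc1 : c ≤ 1 := hc₀.trans (hle1 _ hy₀)
  have ha1 : ⟪x₀, m⟫ ≤ 1 := by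
    have h0 := hle1 _ hy₀
    have h1 := hle1 _ hy₁
    rw [hma]; nlinarith only [h0, h1, hθ₀, hθ₁]
  have hp := abs_le.1 (chord_perturb hm1 he (by nlinarith))
  have hys : ⟪x₀, y⟫ = ⟪x₀, m⟫ + s := by
    rw [hye, inner_add_right, inner_add_right, hxe, inner_smul_right, real_inner_self_eq_norm_sq,
      hx₀]
    ring
  have hy2 : 1 = ‖m‖ ^ 2 + (2 * ⟪m, e⟫ + ‖e‖ ^ 2) + (2 * s * ⟪x₀, m⟫ + s ^ 2) := by
    have h1 : ‖y‖ ^ 2 = ‖m‖ ^ 2 + (2 * ⟪m, e⟫ + ‖e‖ ^ 2) + (2 * s * ⟪x₀, m⟫ + s ^ 2) := by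
      rw [hye, norm_add_sq_real, norm_add_sq_real, norm_smul, mul_pow, hx₀, inner_smul_right,
        inner_add_left m e x₀, real_inner_comm x₀ m, real_inner_comm x₀ e, hxe, Real.norm_eq_abs, sq_abs]
      ring
    rw [← h1, hy]; norm_num
  set a := ⟪x₀, m⟫
  have hys1 := hle1 y hy
  have hsum0 : c ≤ s + 2 * a := by linarith
  have hsum1 : s + 2 * a ≤ 2 := by linarith
  have hprod : s * (s + 2 * a) = θ * (1 - θ) * r ^ 2 - (2 * ⟪m, e⟫ + ‖e‖ ^ 2) := by
    rw [hmn] at hy2; linarith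
  have hpl : 9 / 64 * r ^ 2 ≤ s * (s + 2 * a) := by
    rw [hprod]; nlinarith [sq_nonneg r]
  have hpu : s * (s + 2 * a) ≤ r ^ 2 / 2 := by
    rw [hprod]; nlinarith [sq_nonneg r]
  have hspos : 0 < s := by
    by_contra! hs
    linarith [mul_nonneg (neg_nonneg.2 hs) (hc.le.trans hsum0), pow_pos hr0 2]
  have hsl : r ^ 2 / 16 ≤ s := by
    linarith [sq_nonneg r, mul_le_mul_of_nonneg_left hsum1 hspos.le]
  have hsu : s ≤ r / c := by
    rw [le_div_iff₀ hc]
    have := mul_le_mul_of_nonneg_left hsum0 hspos.le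
    nlinarith only [this, hpu, hr2, hr0]
  refine ⟨hsl, hsu, ?_⟩
  have hyy : y - y₁ = (1 - θ) • (y₀ - y₁) + e + s • x₀ := by
    rw [hye, hm]; module
  have h5 : ‖y - y₁‖ ≤ (1 - θ) * r + r ^ 2 / 64 + s := by
    rw [hyy]
    refine (norm_add₃_le).trans ?_
    rw [norm_smul, norm_smul, hx₀, Real.norm_of_nonneg (by linarith : 0 ≤ 1 - θ),
      Real.norm_of_nonneg hspos.le, norm_sub_rev, ← hr]
    linarith
  have h6 : r ≤ r / c := by rw [le_div_iff₀ hc]; nlinarith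
  have h7 : 3 * r / c = 3 * (r / c) := by ring
  have h8 : (1 - θ) * r ≤ 1 * r := mul_le_mul_of_nonneg_right (by linarith) hr0.le
  have h9 : r ^ 2 / 64 ≤ r := by nlinarith only [hr2, hr0]
  rw [h7]
  linarith

/-- If `y` lies near the middle of the chord from `y₀ = t(x₀)` to `y₁ = t(x₁)`, then monotonicity
forces every source `x` of `y` to be close to `x₀`. -/
lemma source_near {E : Type*} [NormedAddCommGroup E] [InnerProductSpace ℝ E]
    {x₀ x₁ x y₀ y₁ e y : E} {c p d s θ : ℝ}
    (hx₀ : ‖x₀‖ = 1) (hx : ‖x‖ = 1) (hy₀ : ‖y₀‖ = 1) (hy₁ : ‖y₁‖ = 1) (hc : 0 < c)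
    (hc₀ : c ≤ ⟪x₀, y₀⟫) (hc₁ : c ≤ ⟪x₀, y₁⟫)
    (hp : 0 < p) (hd : 0 < d) (hdp : d ≤ p)
    (hr : p ^ 2 = ‖y₁ - y₀‖) (hδ : d ^ 2 = ‖x₁ - x₀‖)
    (hθ₀ : 1 / 4 ≤ θ) (hθ₁ : θ ≤ 3 / 4) (he : ‖e‖ ≤ p ^ 3 * d / 64) (hxe : ⟪x₀, e⟫ = 0)
    (hy : ‖y‖ = 1) (hxy : 0 ≤ ⟪x₀, y⟫) (hye : y = (1 - θ) • y₀ + θ • y₁ + e + s • x₀)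
    (hm₀ : 0 ≤ ⟪x - x₀, y - y₀⟫) (hm₁ : 0 ≤ ⟪x - x₁, y - y₁⟫) :
    ‖x - x₀‖ ≤ 20 / c * (d / p) := by
  have hep : ‖e‖ ≤ (p ^ 2) ^ 2 / 64 := by
    refine he.trans ?_
    have : p ^ 3 * d ≤ p ^ 3 * p := by gcongr
    nlinarith
  obtain ⟨hsl, -, hyy⟩ := chord_height hx₀ hy₀ hy₁ hc hc₀ hc₁ hr (by positivity) hθ₀ hθ₁ hep hxe hy
    hxy hye
  have hc1 : c ≤ 1 := by
    have := real_inner_le_norm x₀ y₀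
    rw [hx₀, hy₀, one_mul] at this
    linarith
  set D := ‖x - x₀‖ with hD
  have hD0 : 0 ≤ D := norm_nonneg _
  have hB : -(3 * p ^ 2 / c * d ^ 2) ≤ ⟪x - x₀, y - y₁⟫ := by
    have h1 : ⟪x - x₀, y - y₁⟫ = ⟪x - x₁, y - y₁⟫ + ⟪x₁ - x₀, y - y₁⟫ := by
      rw [← inner_add_left, sub_add_sub_cancel]
    have h2 := (abs_le.1 (abs_real_inner_le_norm (x₁ - x₀) (y - y₁))).1
    have h3 : ‖x₁ - x₀‖ * ‖y - y₁‖ ≤ d ^ 2 * (3 * p ^ 2 / c) := by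
      rw [← hδ]; gcongr
    linarith
  have hcomb : (1 - θ) * ⟪x - x₀, y - y₀⟫ + θ * ⟪x - x₀, y - y₁⟫ =
      ⟪x - x₀, e⟫ - s * (D ^ 2 / 2) := by
    have h1 : (1 - θ) • (y - y₀) + θ • (y - y₁) = e + s • x₀ := by
      nth_rw 1 2 [hye]; module
    have h2 : ⟪x - x₀, x₀⟫ = -(D ^ 2 / 2) := by
      have := norm_sub_sq_real x x₀
      rw [hx, hx₀, ← hD] at this
      rw [inner_sub_left, real_inner_self_eq_norm_sq, hx₀]
      linarith
    rw [← inner_smul_right, ← inner_smul_right, ← inner_add_right, h1, inner_add_right,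
      inner_smul_right, h2]
    ring
  have hE : ⟪x - x₀, e⟫ ≤ D * (p ^ 3 * d / 64) := by
    refine (real_inner_le_norm _ _).trans ?_
    gcongr
  have hPQ : 0 ≤ 3 * p ^ 2 / c * d ^ 2 := by positivity
  have hmain : s * (D ^ 2 / 2) ≤ D * (p ^ 3 * d / 64) + 3 * p ^ 2 / c * d ^ 2 := by
    have h1 := mul_nonneg (show (0 : ℝ) ≤ 1 - θ by linarith) hm₀
    have h2 := mul_le_mul_of_nonneg_left hB (show (0 : ℝ) ≤ θ by linarith)
    have h3 := mul_le_mul_of_nonneg_right (show θ ≤ 1 by linarith) hPQ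
    linarith
  have hmain2 : (p ^ 2) ^ 2 / 16 * (D ^ 2 / 2) ≤ D * (p ^ 3 * d / 64) + 3 * p ^ 2 / c * d ^ 2 :=
    le_trans (by gcongr) hmain
  -- In units of `d / p`, the distance `T = D p / d` satisfies `T² ≤ T / 2 + 96 / c`.
  set T := D * p / d with hT
  have hDT : D = T * (d / p) := by rw [hT]; field_simp
  have hT0 : 0 ≤ T := by positivity
  have hTq : T ^ 2 ≤ T / 2 + 96 / c := by
    have h1 : (p ^ 2) ^ 2 / 16 * (D ^ 2 / 2) = (p ^ 2 * d ^ 2 / 32) * T ^ 2 := by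
      rw [hDT]; field_simp; ring
    have h2 : D * (p ^ 3 * d / 64) + 3 * p ^ 2 / c * d ^ 2 =
        (p ^ 2 * d ^ 2 / 32) * (T / 2 + 96 / c) := by
      rw [hDT]; field_simp; ring
    rw [h1, h2] at hmain2
    exact le_of_mul_le_mul_left hmain2 (by positivity)
  rw [hDT]
  refine mul_le_mul_of_nonneg_right ?_ (by positivity)
  by_contra! hlt
  have h20 : 20 ≤ 20 / c := by rw [le_div_iff₀ hc]; nlinarith
  have h96 : 96 / c = 96 / 20 * (20 / c) := by ring
  nlinarith only [mul_le_mul_of_nonneg_right (h20.trans hlt.le) hT0, h96, hTq, hlt, h20]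

/-! ### Transport of the tube over a chord -/

/-- Away from the equator `x₀^⊥`, orthogonal projection along `x₀` shrinks chords of the sphere by
a bounded factor only. -/
lemma norm_tangent_chord_ge {E : Type*} [NormedAddCommGroup E] [InnerProductSpace ℝ E]
    {x₀ y₀ y₁ : E} {c : ℝ} (hx₀ : ‖x₀‖ = 1) (hy₀ : ‖y₀‖ = 1) (hy₁ : ‖y₁‖ = 1) (hc : 0 < c)
    (hc₀ : c ≤ ⟪x₀, y₀⟫) (hc₁ : c ≤ ⟪x₀, y₁⟫) :
    c * ‖y₁ - y₀‖ / 2 ≤ ‖(y₁ - y₀) - ⟪x₀, y₁ - y₀⟫ • x₀‖ := by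
  have key : ∀ z : E, ‖z - ⟪x₀, z⟫ • x₀‖ ^ 2 = ‖z‖ ^ 2 - ⟪x₀, z⟫ ^ 2 := by
    intro z
    rw [norm_sub_sq_real, inner_smul_right, norm_smul, hx₀, real_inner_comm, Real.norm_eq_abs,
      mul_one, sq_abs]
    ring
  set l := ‖(y₁ - y₀) - ⟪x₀, y₁ - y₀⟫ • x₀‖ with hl
  have hl2 : l ^ 2 = ‖y₁ - y₀‖ ^ 2 - ⟪x₀, y₁ - y₀⟫ ^ 2 := key _
  have hl0 : 0 ≤ l := norm_nonneg _
  set u₀ := y₀ - ⟪x₀, y₀⟫ • x₀ with hu₀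
  set u₁ := y₁ - ⟪x₀, y₁⟫ • x₀ with hu₁
  have h0 : ‖u₀‖ ^ 2 = 1 - ⟪x₀, y₀⟫ ^ 2 := by rw [hu₀, key, hy₀]; norm_num
  have h1 : ‖u₁‖ ^ 2 = 1 - ⟪x₀, y₁⟫ ^ 2 := by rw [hu₁, key, hy₁]; norm_num
  have hsub : |‖u₁‖ - ‖u₀‖| ≤ l := by
    refine (abs_norm_sub_norm_le _ _).trans (le_of_eq ?_)
    rw [hl, hu₀, hu₁, inner_sub_right]
    congr 1
    module
  have hs0 : ‖u₀‖ ≤ 1 := by nlinarith [norm_nonneg u₀, sq_nonneg ⟪x₀, y₀⟫]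
  have hs1 : ‖u₁‖ ≤ 1 := by nlinarith [norm_nonneg u₁, sq_nonneg ⟪x₀, y₁⟫]
  have hh : ⟪x₀, y₁ - y₀⟫ = ⟪x₀, y₁⟫ - ⟪x₀, y₀⟫ := inner_sub_right _ _ _
  have hprod : |⟪x₀, y₁ - y₀⟫| * (⟪x₀, y₁⟫ + ⟪x₀, y₀⟫) ≤ l * 2 := by
    have e1 : |⟪x₀, y₁ - y₀⟫| * (⟪x₀, y₁⟫ + ⟪x₀, y₀⟫) = |‖u₁‖ - ‖u₀‖| * (‖u₁‖ + ‖u₀‖) := by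
      rw [← abs_of_nonneg (show 0 ≤ ⟪x₀, y₁⟫ + ⟪x₀, y₀⟫ by linarith),
        ← abs_of_nonneg (show 0 ≤ ‖u₁‖ + ‖u₀‖ by positivity), ← abs_mul, ← abs_mul, hh,
        ← abs_neg]
      congr 1
      linarith
    rw [e1]
    exact mul_le_mul hsub (by linarith) (by positivity) hl0
  have hbd : |⟪x₀, y₁ - y₀⟫| * c ≤ l := by
    have := mul_le_mul_of_nonneg_left (show 2 * c ≤ ⟪x₀, y₁⟫ + ⟪x₀, y₀⟫ by linarith)
      (abs_nonneg ⟪x₀, y₁ - y₀⟫)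
    linarith
  have hc1 : c ≤ 1 := by
    have := real_inner_le_norm x₀ y₀
    rw [hx₀, hy₀, one_mul] at this
    linarith
  have hsq : (|⟪x₀, y₁ - y₀⟫| * c) ^ 2 ≤ l ^ 2 := pow_le_pow_left₀ (by positivity) hbd 2
  rw [mul_pow, sq_abs] at hsq
  refine (abs_le_of_sq_le_sq' ?_ hl0).2
  have hcl : c ^ 2 * l ^ 2 ≤ 1 * l ^ 2 :=
    mul_le_mul_of_nonneg_right (by nlinarith) (sq_nonneg l)
  have e2 : (c * ‖y₁ - y₀‖ / 2) ^ 2 = (c ^ 2 * l ^ 2 + ⟪x₀, y₁ - y₀⟫ ^ 2 * c ^ 2) / 4 := by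
    rw [hl2]; ring
  rw [e2]
  nlinarith [sq_nonneg l]

/-- The box in the tangent hyperplane around the middle half of a segment of length `l` which starts
at `a` and points in the `j`-th coordinate direction; its transversal half-width is `η`. -/
def tubeBox {n : ℕ} (a : Fin n → ℝ) (j : Fin n) (l η : ℝ) : Set (Fin n → ℝ) :=
  Icc (fun i => a i + if i = j then l / 4 else -η) (fun i => a i + if i = j then 3 * l / 4 else η)

lemma volume_tubeBox {n : ℕ} (a : Fin n → ℝ) (j : Fin n) {l η : ℝ} (hl : 0 ≤ l) (hη : 0 ≤ η) :
    volume (tubeBox a j l η) = ENNReal.ofReal (l / 2 * (2 * η) ^ (n - 1)) := by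
  rw [tubeBox, Real.volume_Icc_pi, ← Finset.mul_prod_erase Finset.univ _ (Finset.mem_univ j),
    ENNReal.ofReal_mul (by positivity), ENNReal.ofReal_pow (by positivity)]
  congr 1
  · congr 1
    simp only [if_true]
    ring
  · rw [Finset.prod_congr rfl (g := fun _ => ENNReal.ofReal (2 * η)), Finset.prod_const,
      Finset.card_erase_of_mem (Finset.mem_univ j), Finset.card_univ, Fintype.card_fin]
    intro i hi
    rw [if_neg (Finset.ne_of_mem_erase hi), if_neg (Finset.ne_of_mem_erase hi)]
    congr 1
    ring

/-- Points projecting into the tube around a chord are chord points up to a vertical displacement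
and a small tangential error. -/
lemma exists_decomp_of_mem_tubeBox {n : ℕ} (b : OrthonormalBasis (Fin (n + 1)) ℝ (Euc n))
    {y₀ y₁ z : Euc n} {j : Fin n} {l η : ℝ} (hl : 0 < l) (hη : 0 ≤ η)
    (hw : (y₁ - y₀) - ⟪b 0, y₁ - y₀⟫ • b 0 = l • b j.succ)
    (hz : tangentCoord b z ∈ tubeBox (tangentCoord b y₀) j l η) :
    ∃ (θ s : ℝ) (e : Euc n), 1 / 4 ≤ θ ∧ θ ≤ 3 / 4 ∧ ‖e‖ ≤ n * η ∧ ⟪b 0, e⟫ = 0 ∧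
      z = (1 - θ) • y₀ + θ • y₁ + e + s • b 0 := by
  have hb0 : ⟪b 0, b 0⟫ = 1 := by rw [real_inner_self_eq_norm_sq, b.orthonormal.1]; norm_num
  have hbs : ∀ i : Fin n, ⟪b i.succ, b 0⟫ = 0 := fun i => b.orthonormal.2 (Fin.succ_ne_zero i)
  have hd : ∀ i, tangentCoord b y₁ i = tangentCoord b y₀ i + if i = j then l else 0 := by
    intro i
    have h1 : ⟪b i.succ, (y₁ - y₀) - ⟪b 0, y₁ - y₀⟫ • b 0⟫ = ⟪b i.succ, l • b j.succ⟫ := by rw [hw]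
    rw [inner_sub_right, inner_smul_right, hbs, inner_smul_right, inner_sub_right,
      orthonormal_iff_ite.1 b.orthonormal] at h1
    simp only [Fin.succ_inj, mul_ite, mul_one, mul_zero, sub_zero] at h1
    change ⟪b i.succ, y₁⟫ = ⟪b i.succ, y₀⟫ + _
    linarith
  set θ := (tangentCoord b z j - tangentCoord b y₀ j) / l with hθ
  have hzj := And.intro (hz.1 j) (hz.2 j)
  simp only [if_true] at hzj
  set m := (1 - θ) • y₀ + θ • y₁ with hm
  set s := ⟪b 0, z - m⟫ with hs
  have hmc : ∀ i, tangentCoord b m i = tangentCoord b y₀ i + θ * if i = j then l else 0 := by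
    intro i
    have : tangentCoord b m i = (1 - θ) * tangentCoord b y₀ i + θ * tangentCoord b y₁ i := by
      simp only [tangentCoord, hm, inner_add_right, inner_smul_right]
    rw [this, hd]
    ring
  have he0 : ⟪b 0, z - m - s • b 0⟫ = 0 := by
    rw [inner_sub_right, inner_smul_right, hb0, hs]; ring
  refine ⟨θ, s, z - m - s • b 0, ?_, ?_, ?_, he0, by rw [← hm]; abel⟩
  · rw [hθ, le_div_iff₀ hl]; linarith
  · rw [hθ, div_le_iff₀ hl]; linarith
  · have hec : ∀ i, |tangentCoord b (z - m - s • b 0) i| ≤ η := by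
      intro i
      have h1 : tangentCoord b (z - m - s • b 0) i = tangentCoord b z i - tangentCoord b m i := by
        simp only [tangentCoord, inner_sub_right, inner_smul_right, hbs]; ring
      rw [h1, hmc]
      by_cases hij : i = j
      · subst hij
        rw [if_pos rfl, hθ, div_mul_cancel₀ _ hl.ne', add_sub_cancel, sub_self, abs_zero]
        exact hη
      · have h2 := hz.1 i
        have h3 := hz.2 i
        simp only [if_neg hij] at h2 h3 ⊢
        rw [abs_le]
        constructor <;> linarith
    have h := norm_sq_eq_tangentCoord b (z - m - s • b 0)
    rw [he0] at h
    have hsum : ∑ i, tangentCoord b (z - m - s • b 0) i ^ 2 ≤ n * η ^ 2 := by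
      calc _ ≤ ∑ _i : Fin n, η ^ 2 := by
            refine Finset.sum_le_sum fun i _ => ?_
            rw [← sq_abs]
            exact pow_le_pow_left₀ (abs_nonneg _) (hec i) 2
        _ = n * η ^ 2 := by simp
    have hn : (n : ℝ) ≤ n ^ 2 := by
      exact_mod_cast Nat.le_self_pow (by norm_num) n
    refine (abs_le_of_sq_le_sq' ?_ (by positivity)).2
    nlinarith [mul_le_mul_of_nonneg_right hn (sq_nonneg η)]

/-- The mass comparison: the spherical tube over the middle of the projected chord from `y₀` to `y₁`
is transported from a small ball about `x₀`.  Here `p ^ 2` and `d ^ 2` are the distances between the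
two targets and between the two sources. -/
lemma mass_comparison {n : ℕ} (hn : 1 < n) {μ ν : Measure (Euc n)} {γ : Measure (Euc n × Euc n)}
    (hγ₁ : γ.map Prod.fst = μ) (hγ₂ : γ.map Prod.snd = ν)
    (hmono : ∀ z ∈ γ.support, ∀ w ∈ γ.support, 0 ≤ ⟪z.1 - w.1, z.2 - w.2⟫)
    (hsph : ∀ z ∈ γ.support, ‖z.1‖ = 1 ∧ ‖z.2‖ = 1)
    {ε M : ℝ} (hε0 : 0 < ε) (hM0 : 0 ≤ M) (hε : ENNReal.ofReal ε • sphereMeasure n ≤ ν)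
    (hM : ∀ x : Euc n, ‖x‖ = 1 → ∀ R : ℝ, 0 ≤ R →
      μ (closedBall x R) ≤ ENNReal.ofReal (M * R ^ n))
    {x₀ x₁ y₀ y₁ : Euc n} (h₀ : (x₀, y₀) ∈ γ.support) (h₁ : (x₁, y₁) ∈ γ.support)
    {c p d : ℝ} (hc : 0 < c) (hc₀ : c ≤ ⟪x₀, y₀⟫) (hc₁ : c ≤ ⟪x₀, y₁⟫)
    (hp : 0 < p) (hd : 0 < d) (hdp : d ≤ p)
    (hr : p ^ 2 = ‖y₁ - y₀‖) (hδ : d ^ 2 = ‖x₁ - x₀‖) :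
    ε * (c * p ^ 2 / 4 * (p ^ 3 * d / (32 * n)) ^ (n - 1)) ≤ M * (20 / c * (d / p)) ^ n := by
  obtain ⟨hx₀, hy₀⟩ := hsph _ h₀
  obtain ⟨hx₁, hy₁⟩ := hsph _ h₁
  simp only at hx₀ hy₀ hx₁ hy₁
  have hn0 : (0 : ℝ) < n := by exact_mod_cast (by omega : 0 < n)
  set w := (y₁ - y₀) - ⟪x₀, y₁ - y₀⟫ • x₀ with hw
  set l := ‖w‖ with hl
  have hlr : c * p ^ 2 / 2 ≤ l := by
    rw [hr]; exact norm_tangent_chord_ge hx₀ hy₀ hy₁ hc hc₀ hc₁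
  have hl0 : 0 < l := lt_of_lt_of_le (by positivity) hlr
  set j : Fin n := ⟨0, by omega⟩
  have hu : ‖l⁻¹ • w‖ = 1 := by
    rw [norm_smul, norm_inv, Real.norm_of_nonneg hl0.le, ← hl, inv_mul_cancel₀ hl0.ne']
  have hxu : ⟪x₀, l⁻¹ • w⟫ = 0 := by
    rw [inner_smul_right, hw, inner_sub_right x₀ (y₁ - y₀), inner_smul_right,
      real_inner_self_eq_norm_sq, hx₀]
    ring
  obtain ⟨b, hb0, hbj⟩ := exists_orthonormalBasis_zero_succ hx₀ hu hxu j
  have hwb : (y₁ - y₀) - ⟪b 0, y₁ - y₀⟫ • b 0 = l • b j.succ := by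
    rw [hb0, hbj, smul_smul, mul_inv_cancel₀ hl0.ne', one_smul]
  -- The tube width is chosen to balance the two error terms in `source_near`.
  set η := p ^ 3 * d / (64 * n) with hη
  have hη0 : 0 ≤ η := by positivity
  have hnη : n * η = p ^ 3 * d / 64 := by rw [hη]; field_simp
  have hnη2 : n * η ≤ (p ^ 2) ^ 2 / 64 := by
    rw [hnη]
    have : p ^ 3 * d ≤ p ^ 3 * p := by gcongr
    nlinarith
  set T := tubeBox (tangentCoord b y₀) j l η with hT
  have hT1 : ∀ t ∈ T, ∑ i, t i ^ 2 ≤ 1 := by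
    intro t ht
    set v : Euc n := b.repr.symm (WithLp.toLp 2 (Fin.cons 0 t : Fin (n + 1) → ℝ)) with hv
    have hin : ∀ i, ⟪b i, v⟫ = (Fin.cons 0 t : Fin (n + 1) → ℝ) i := by
      intro i
      rw [← b.repr_apply_apply, hv, LinearIsometryEquiv.apply_symm_apply]
    have hvc : tangentCoord b v = t := by
      ext i; rw [tangentCoord, hin, Fin.cons_succ]
    have hvn := norm_sq_eq_tangentCoord b v
    have hv0 : ⟪b 0, v⟫ = 0 := by rw [hin, Fin.cons_zero]
    rw [hvc, hv0] at hvn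
    obtain ⟨θ, s, e, hθ₀, hθ₁, he, hbe, hve⟩ :=
      exists_decomp_of_mem_tubeBox b hl0 hη0 hwb (z := v) (by rwa [hvc])
    set m := (1 - θ) • y₀ + θ • y₁ with hm
    have hmn : ‖m‖ ^ 2 = 1 - θ * (1 - θ) * (p ^ 2) ^ 2 := by
      rw [hr]; exact norm_sq_chord hy₀ hy₁ θ
    have hθl : 3 / 16 ≤ θ * (1 - θ) := by nlinarith only [hθ₀, hθ₁]
    have hθr := mul_le_mul_of_nonneg_right hθl (sq_nonneg (p ^ 2))
    have hm1 : ‖m‖ ≤ 1 := by nlinarith only [norm_nonneg m, hθr, hmn, sq_nonneg (p ^ 2)]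
    have hp2 : p ^ 2 ≤ 2 := by
      rw [hr]; refine (norm_sub_le _ _).trans ?_; rw [hy₀, hy₁]; norm_num
    have hpert := abs_le.1 (chord_perturb hm1 (he.trans hnη2)
      (by nlinarith only [hp2, sq_nonneg p]))
    have hbb : ‖b 0‖ = 1 := b.orthonormal.1 0
    have hms : ⟪b 0, m⟫ = -s := by
      rw [hve, inner_add_right, inner_add_right, hbe, inner_smul_right,
        real_inner_self_eq_norm_sq, hbb] at hv0
      linarith
    have hv2 : ‖v‖ ^ 2 = ‖m‖ ^ 2 + (2 * ⟪m, e⟫ + ‖e‖ ^ 2) - s ^ 2 := by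
      rw [hve, norm_add_sq_real, norm_add_sq_real, norm_smul, mul_pow, hbb, inner_smul_right,
        inner_add_left m e (b 0), real_inner_comm (b 0) m, real_inner_comm (b 0) e, hbe, hms,
        Real.norm_eq_abs, sq_abs]
      ring
    nlinarith only [hv2, hvn, hpert.2, hmn, hθr, sq_nonneg s, sq_nonneg (p ^ 2)]
  have hTc : IsClosed T := isClosed_Icc
  have hvol : ENNReal.ofReal (l / 2 * (2 * η) ^ (n - 1)) ≤ sphereMeasure n (sphereLift b T) := by
    rw [← volume_tubeBox (tangentCoord b y₀) j hl0.le hη0]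
    exact volume_le_sphereLift b hT1
  have hYm : MeasurableSet (sphereLift b T) := (isClosed_sphereLift b hTc).measurableSet
  have htrans : ν (sphereLift b T) ≤ μ (closedBall x₀ (20 / c * (d / p))) := by
    rw [← hγ₁, ← hγ₂, Measure.map_apply measurable_snd hYm,
      Measure.map_apply measurable_fst measurableSet_closedBall]
    refine measure_mono_ae ?_
    filter_upwards [Measure.support_mem_ae (μ := γ)] with z hz hzY
    obtain ⟨hy, hxy, hyT⟩ := hzY
    obtain ⟨θ, s, e, hθ₀, hθ₁, he, hbe, hye⟩ :=
      exists_decomp_of_mem_tubeBox b hl0 hη0 hwb hyT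
    rw [hb0] at hbe hye hxy
    rw [hnη] at he
    have := source_near hx₀ (hsph z hz).1 hy₀ hy₁ hc hc₀ hc₁ hp hd hdp hr hδ hθ₀ hθ₁ he hbe hy hxy
      hye (hmono _ hz _ h₀) (hmono _ hz _ h₁)
    change z.1 ∈ closedBall x₀ _
    rwa [mem_closedBall, dist_eq_norm]
  have hfinal : ENNReal.ofReal (ε * (l / 2 * (2 * η) ^ (n - 1))) ≤
      ENNReal.ofReal (M * (20 / c * (d / p)) ^ n) := by
    rw [ENNReal.ofReal_mul hε0.le]
    calc _ ≤ ENNReal.ofReal ε * sphereMeasure n (sphereLift b T) := by gcongr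
      _ ≤ ν (sphereLift b T) := hε _
      _ ≤ _ := htrans.trans (hM x₀ hx₀ _ (by positivity))
  rw [ENNReal.ofReal_le_ofReal_iff (by positivity)] at hfinal
  refine le_trans ?_ hfinal
  have h2η : 2 * η = p ^ 3 * d / (32 * n) := by rw [hη]; field_simp; norm_num
  rw [h2η]
  have hl4 : c * p ^ 2 / 4 ≤ l / 2 := by linarith
  exact mul_le_mul_of_nonneg_left (mul_le_mul_of_nonneg_right hl4 (by positivity)) hε0.le

/-- Solving the mass comparison for the distance `p ^ 2` between the targets. -/
lemma pow_le_of_mass_comparison {n : ℕ} (hn : 1 < n) {ε M c p d : ℝ} (hε : 0 < ε)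
    (hc : 0 < c) (hp : 0 < p) (hd : 0 < d)
    (h : ε * (c * p ^ 2 / 4 * (p ^ 3 * d / (32 * n)) ^ (n - 1)) ≤ M * (20 / c * (d / p)) ^ n) :
    (p ^ 2) ^ (4 * n - 1) ≤
      (M * (20 / c) ^ n / (ε * (c / 4) * (1 / (32 * n)) ^ (n - 1))) ^ 2 * d ^ 2 := by
  obtain ⟨k, rfl⟩ : ∃ k, n = k + 1 := ⟨n - 1, by omega⟩
  simp only [Nat.add_sub_cancel] at h ⊢
  have he : 4 * (k + 1) - 1 = 4 * k + 3 := by omega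
  rw [he]
  set N : ℝ := ((k + 1 : ℕ) : ℝ) with hN
  have hN0 : 0 < N := by rw [hN]; positivity
  set A := ε * (c / 4) * (1 / (32 * N)) ^ k with hA
  set B := M * (20 / c) ^ (k + 1) with hB
  have hA0 : 0 < A := by positivity
  have e1 : ε * (c * p ^ 2 / 4 * (p ^ 3 * d / (32 * N)) ^ k) = A * p ^ (3 * k + 2) * d ^ k := by
    rw [hA, show p ^ 3 * d / (32 * N) = p ^ 3 * d * (1 / (32 * N)) by ring, mul_pow, mul_pow,
      ← pow_mul]
    ring
  have e2 : M * (20 / c * (d / p)) ^ (k + 1) = B * d * d ^ k / p ^ (k + 1) := by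
    rw [hB, mul_pow, div_pow d p]
    ring
  rw [e1, e2, le_div_iff₀ (by positivity)] at h
  have h2 : A * p ^ (4 * k + 3) ≤ B * d := by
    have h3 : (A * p ^ (4 * k + 3)) * d ^ k ≤ (B * d) * d ^ k := by
      calc _ = A * p ^ (3 * k + 2) * d ^ k * p ^ (k + 1) := by ring
        _ ≤ _ := h
    exact le_of_mul_le_mul_right h3 (by positivity)
  have h4 : p ^ (4 * k + 3) ≤ B / A * d := by
    rw [div_mul_eq_mul_div, le_div_iff₀ hA0]; linarith
  calc (p ^ 2) ^ (4 * k + 3) = (p ^ (4 * k + 3)) ^ 2 := by ring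
    _ ≤ (B / A * d) ^ 2 := by gcongr
    _ = _ := by ring

/-! ### Local bounds on the measures and Hölder continuity -/

lemma sphereMeasure_ball_pos {n : ℕ} {x : Euc n} (hx : ‖x‖ = 1) {ρ : ℝ} (hρ : 0 < ρ) :
    0 < sphereMeasure n (ball x ρ) := by
  obtain ⟨b, hb⟩ := exists_orthonormalBasis_zero hx
  set κ := min 1 ρ with hκ
  have hκ0 : 0 < κ := lt_min one_pos hρ
  have hκ1 : κ ≤ 1 := min_le_left _ _
  have hκρ : κ ≤ ρ := min_le_right _ _
  set t := κ / (2 * (n + 1)) with ht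
  have ht0 : 0 < t := by positivity
  have hnt : n * t ^ 2 ≤ κ ^ 2 / 4 := by
    have h1 : ((n : ℝ) + 1) * t = κ / 2 := by rw [ht]; field_simp
    have h2 : (n : ℝ) * t ^ 2 ≤ (((n : ℝ) + 1) * t) ^ 2 := by
      rw [mul_pow]
      refine mul_le_mul_of_nonneg_right ?_ (sq_nonneg t)
      nlinarith [(Nat.cast_nonneg n : (0 : ℝ) ≤ n)]
    rw [h1] at h2
    linarith
  have hsum : ∀ u ∈ closedBall (0 : Fin n → ℝ) t, ∑ i, u i ^ 2 ≤ κ ^ 2 / 4 := by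
    intro u hu
    rw [mem_closedBall_zero_iff, pi_norm_le_iff_of_nonneg ht0.le] at hu
    calc _ ≤ ∑ _i : Fin n, t ^ 2 := by
          refine Finset.sum_le_sum fun i _ => ?_
          rw [← sq_abs]
          exact pow_le_pow_left₀ (abs_nonneg _) (hu i) 2
      _ = n * t ^ 2 := by simp
      _ ≤ _ := hnt
  have hvol := volume_le_sphereLift b (T := closedBall 0 t)
    fun u hu => (hsum u hu).trans (by nlinarith)
  rw [Real.volume_pi_closedBall _ ht0.le] at hvol
  refine lt_of_lt_of_le (ENNReal.ofReal_pos.2 (by positivity)) (hvol.trans (measure_mono ?_))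
  rintro y ⟨hy1, hy0, hyT⟩
  have h1 := norm_sq_eq_tangentCoord b y
  have h2 := hsum _ hyT
  have h3 := norm_sub_sq_real y x
  rw [hb] at h1 hy0
  rw [hy1] at h1 h3
  rw [hx, real_inner_comm] at h3
  rw [mem_ball, dist_eq_norm]
  have h4 : ⟪x, y⟫ ≤ 1 := by
    have := real_inner_le_norm x y
    rwa [hx, hy1, one_mul] at this
  refine lt_of_pow_lt_pow_left₀ 2 hρ.le ?_
  have h5 : κ ^ 2 ≤ ρ ^ 2 := pow_le_pow_left₀ hκ0.le hκρ 2
  nlinarith [pow_pos hκ0 2]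

/-- Upper Ahlfors regularity of a probability measure with bounded density on the sphere. -/
lemma exists_closedBall_bound {n : ℕ} {μ : Measure (Euc n)} [IsProbabilityMeasure μ] {ε : ℝ≥0∞}
    (hε : 0 < ε) (hμ : μ ≤ ε⁻¹ • sphereMeasure n) :
    ∃ M : ℝ, 0 ≤ M ∧ ∀ x : Euc n, ‖x‖ = 1 → ∀ R : ℝ, 0 ≤ R →
      μ (closedBall x R) ≤ ENNReal.ofReal (M * R ^ n) := by
  have hεt : ε⁻¹ ≠ ⊤ := ENNReal.inv_ne_top.2 hε.ne'
  set k := (ε⁻¹).toReal with hk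
  have hk0 : 0 ≤ k := ENNReal.toReal_nonneg
  refine ⟨k * (4 * n) ^ n + 2 ^ n, by positivity, fun x hx R hR0 => ?_⟩
  rcases le_total R (1 / 2) with hR | hR
  · calc μ (closedBall x R) ≤ ε⁻¹ * sphereMeasure n (closedBall x R) := hμ _
      _ ≤ ENNReal.ofReal k * ENNReal.ofReal ((4 * n * R) ^ n) := by
        rw [hk, ENNReal.ofReal_toReal hεt]
        gcongr
        exact sphereMeasure_closedBall_le hx hR0 hR
      _ = ENNReal.ofReal (k * (4 * n) ^ n * R ^ n) := by
        rw [← ENNReal.ofReal_mul hk0, mul_pow (4 * (n : ℝ)) R, mul_assoc]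
      _ ≤ _ := by
        refine ENNReal.ofReal_le_ofReal ?_
        have : 0 ≤ 2 ^ n * R ^ n := by positivity
        linarith
  · calc μ (closedBall x R) ≤ 1 := prob_le_one
      _ ≤ _ := by
        rw [ENNReal.one_le_ofReal]
        have h1 : 1 ≤ (2 * R) ^ n := one_le_pow₀ (by linarith)
        rw [mul_pow] at h1
        have : 0 ≤ k * (4 * n) ^ n * R ^ n := by positivity
        linarith

/-- Over a univalent point the plan charges every neighbourhood of the graph of `t⁺`. -/
lemma mem_support_of_univalent {n : ℕ} {μ : Measure (Euc n)} {γ : Measure (Euc n × Euc n)}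
    {tp tm : Euc n → Euc n} (hγ₁ : γ.map Prod.fst = μ) {ε : ℝ≥0∞} (hε : 0 < ε)
    (hμ : ε • sphereMeasure n ≤ μ) (hsph : ∀ᵐ z ∂γ, z.1 ∈ unitSphere n)
    (hGM : GangboMcCannMaps n γ tp tm) {x : Euc n} (hx : x ∈ unitSphere n) (hpm : tp x = tm x) :
    (x, tp x) ∈ γ.support := by
  obtain ⟨hcp, -, hcm, -, hgraph, -⟩ := hGM
  rw [Measure.mem_support_iff_forall]
  intro U hU
  obtain ⟨V, hV, W, hW, hVW⟩ := mem_nhds_prod_iff.1 hU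
  have h1 : tp ⁻¹' W ∈ nhdsWithin x (unitSphere n) := hcp x hx hW
  have h2 : tm ⁻¹' W ∈ nhdsWithin x (unitSphere n) := hcm x hx (by rwa [← hpm])
  have h3 := Filter.inter_mem (Filter.inter_mem h1 h2) (mem_nhdsWithin_of_mem_nhds hV)
  obtain ⟨ρ, hρ, hball⟩ := Metric.mem_nhdsWithin_iff.1 h3
  have hpos : 0 < μ (ball x ρ) := by
    refine lt_of_lt_of_le ?_ (hμ _)
    exact ENNReal.mul_pos hε.ne'
      (sphereMeasure_ball_pos (by simpa [unitSphere] using hx) hρ).ne'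
  rw [← hγ₁, Measure.map_apply measurable_fst measurableSet_ball] at hpos
  refine lt_of_lt_of_le hpos (measure_mono_ae ?_)
  have hg : ∀ᵐ z ∂γ, ¬ (z.2 ≠ tp z.1 ∧ z.2 ≠ tm z.1) := by
    rw [ae_iff]; simpa only [not_not] using hgraph
  filter_upwards [hsph, hg] with z hz1 hz2 hzb
  obtain ⟨⟨ha, hb⟩, hc⟩ := hball ⟨hzb, hz1⟩
  refine hVW (mk_mem_prod hc ?_)
  by_cases h : z.2 = tp z.1
  · rw [h]; exact ha
  · have h' : z.2 = tm z.1 := by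
      by_contra h''
      exact hz2 ⟨h, h''⟩
    rw [h']; exact hb

lemma le_rpow_of_pow_le {n : ℕ} (hn : 1 < n) {r δ K : ℝ} (hr : 0 ≤ r) (hδ : 0 ≤ δ) (hK : 0 ≤ K)
    (h : r ^ (4 * n - 1) ≤ K * δ) :
    r ≤ K ^ (1 / (4 * (n : ℝ) - 1)) * δ ^ (1 / (4 * (n : ℝ) - 1)) := by
  have hcast : ((4 * n - 1 : ℕ) : ℝ) = 4 * (n : ℝ) - 1 := by
    rw [Nat.cast_sub (by omega)]; push_cast; ring
  have hne : 4 * n - 1 ≠ 0 := by omega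
  rw [← Real.mul_rpow hK hδ, one_div, ← hcast]
  calc r = (r ^ (4 * n - 1)) ^ ((4 * n - 1 : ℕ) : ℝ)⁻¹ := (Real.pow_rpow_inv_natCast hr hne).symm
    _ ≤ _ := Real.rpow_le_rpow (by positivity) h (by positivity)

/-- The outer optimal map `t⁺` is locally Hölder continuous with exponent
`1/(4n−1)` on the non-degenerate univalent set
`S₁ = {x ∈ Sⁿ : t⁺(x) = t⁻(x), x·t⁺(x) > 0}`. -/
theorem tPlus_locallyHolder_on_S1 (n : ℕ) (hn : 1 < n)
    (μ ν : Measure (Euc n)) (γ : Measure (Euc n × Euc n))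
    (tp tm : Euc n → Euc n)
    (hsuit : SymmetricallySuitable n μ ν)
    (hopt : IsOptimalCoupling n μ ν γ)
    (hGM : GangboMcCannMaps n γ tp tm) :
    LocallyHolderOn n tp
      {x ∈ unitSphere n | tp x = tm x ∧ 0 < ⟪x, tp x⟫}
      (1 / (4 * (n : ℝ) - 1)) := by
  obtain ⟨hμp, hνp, ε, hε0, hεt, hμl, hμu, hνl, hνu⟩ := hsuit
  have hγ₁ : γ.map Prod.fst = μ := hopt.1.2.1
  have hγ₂ : γ.map Prod.snd = ν := hopt.1.2.2
  have hγp : IsProbabilityMeasure γ := hopt.1.1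
  have hcl : IsClosed (unitSphere n) := Metric.isClosed_sphere
  have hae : ∀ {κ : Measure (Euc n)}, κ ≤ ε⁻¹ • sphereMeasure n → ∀ᵐ x ∂κ, x ∈ unitSphere n := by
    intro κ hκ
    exact ae_mono hκ (Measure.ae_smul_measure (ae_restrict_mem hcl.measurableSet) _)
  have hae1 : ∀ᵐ z ∂γ, z.1 ∈ unitSphere n :=
    ae_of_ae_map measurable_fst.aemeasurable (by rw [hγ₁]; exact hae hμu)
  have hae2 : ∀ᵐ z ∂γ, z.2 ∈ unitSphere n :=
    ae_of_ae_map measurable_snd.aemeasurable (by rw [hγ₂]; exact hae hνu)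
  have hnorm : ∀ {x : Euc n}, x ∈ unitSphere n → ‖x‖ = 1 := fun {x} hx => by
    simpa [unitSphere] using hx
  have hsph : ∀ z ∈ γ.support, ‖z.1‖ = 1 ∧ ‖z.2‖ = 1 := by
    intro z hz
    have := Measure.support_subset_of_isClosed (μ := γ) (hcl.prod hcl)
      (by filter_upwards [hae1, hae2] with z h1 h2 using ⟨h1, h2⟩) hz
    exact ⟨hnorm this.1, hnorm this.2⟩
  have hfin : transportCost n γ ≠ ⊤ := by
    have hle : transportCost n γ ≤ ∫⁻ _, ENNReal.ofReal (2 ^ 2) ∂γ := by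
      refine lintegral_mono_ae ?_
      filter_upwards [hae1, hae2] with z h1 h2
      refine ENNReal.ofReal_le_ofReal (pow_le_pow_left₀ (norm_nonneg _) ?_ 2)
      refine (norm_sub_le _ _).trans ?_
      rw [hnorm h1, hnorm h2]
      norm_num
    refine ne_top_of_le_ne_top ?_ hle
    simp
  have hmono : ∀ z ∈ γ.support, ∀ w ∈ γ.support, 0 ≤ ⟪z.1 - w.1, z.2 - w.2⟫ :=
    fun z hz w hw => support_monotone hopt hfin hz hw
  obtain ⟨M, hM0, hM⟩ := exists_closedBall_bound hε0 hμu
  have hε' : 0 < ε.toReal := ENNReal.toReal_pos hε0.ne' hεt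
  have hνl' : ENNReal.ofReal ε.toReal • sphereMeasure n ≤ ν := by
    rwa [ENNReal.ofReal_toReal hεt]
  rintro x ⟨hx, hpm, hpos⟩
  set c := ⟪x, tp x⟫ / 2 with hc
  have hc0 : 0 < c := by positivity
  -- Near `x` the lower bound `c ≤ ⟪a, tp a'⟫` holds for all pairs of points `a, a'` of the sphere.
  have hev : ∃ ρ > 0, ∀ a ∈ ball x ρ ∩ unitSphere n, ∀ a' ∈ ball x ρ ∩ unitSphere n,
      c ≤ ⟪a, tp a'⟫ := by
    have htend : Filter.Tendsto (fun z : Euc n × Euc n => ⟪z.1, z.2⟫) (nhds x ×ˢ nhds (tp x))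
        (nhds ⟪x, tp x⟫) := by
      rw [← nhds_prod_eq]
      exact (continuous_inner (𝕜 := ℝ)).tendsto (x, tp x)
    have hnear := htend.eventually (lt_mem_nhds (show c < ⟪x, tp x⟫ by linarith))
    obtain ⟨P, hP, Q, hQ, hPQ⟩ := Filter.eventually_prod_iff.1 hnear
    have hQ' : ∀ᶠ a in nhdsWithin x (unitSphere n), Q (tp a) := hGM.1 x hx hQ
    obtain ⟨ρ, hρ, hball⟩ := Metric.mem_nhdsWithin_iff.1
      (Filter.inter_mem hQ' (mem_nhdsWithin_of_mem_nhds hP))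
    exact ⟨ρ, hρ, fun a ha a' ha' => (hPQ (hball ha).2 (hball ha').1).le⟩
  obtain ⟨ρ, hρ, hcc⟩ := hev
  set K := (M * (20 / c) ^ n / (ε.toReal * (c / 4) * (1 / (32 * n)) ^ (n - 1))) ^ 2 +
    2 ^ (4 * n - 2) with hK
  have hK0 : 0 ≤ K := by positivity
  refine ⟨ball x ρ ∩ {x ∈ unitSphere n | tp x = tm x ∧ 0 < ⟪x, tp x⟫},
    Filter.inter_mem (mem_nhdsWithin_of_mem_nhds (ball_mem_nhds x hρ)) self_mem_nhdsWithin,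
    inter_subset_right, K ^ (1 / (4 * (n : ℝ) - 1)), ?_⟩
  rintro x₀ ⟨hb₀, hs₀, hpm₀, -⟩ x₁ ⟨hb₁, hs₁, hpm₁, -⟩
  have h₀ := mem_support_of_univalent hγ₁ hε0 hμl hae1 hGM hs₀ hpm₀
  have h₁ := mem_support_of_univalent hγ₁ hε0 hμl hae1 hGM hs₁ hpm₁
  refine le_rpow_of_pow_le hn (norm_nonneg _) (norm_nonneg _) hK0 ?_
  set r := ‖tp x₁ - tp x₀‖ with hr
  set δ := ‖x₁ - x₀‖ with hδ
  have hr0 : 0 ≤ r := norm_nonneg _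
  have hδ0 : 0 ≤ δ := norm_nonneg _
  have hr2 : r ≤ 2 := by
    refine (norm_sub_le _ _).trans ?_
    rw [(hsph _ h₀).2, (hsph _ h₁).2]
    norm_num
  rcases le_or_gt r δ with hle | hlt
  · have hexp : 4 * n - 1 = (4 * n - 2) + 1 := by omega
    rw [hexp, pow_succ]
    calc r ^ (4 * n - 2) * r ≤ 2 ^ (4 * n - 2) * δ := by gcongr
      _ ≤ K * δ := by
        refine mul_le_mul_of_nonneg_right ?_ hδ0
        rw [hK]
        exact le_add_of_nonneg_left (sq_nonneg _)
  · have hδpos : 0 < δ := by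
      refine lt_of_le_of_ne hδ0 fun h => ?_
      have hxx : x₁ = x₀ := by
        rw [← sub_eq_zero, ← norm_eq_zero, ← hδ, ← h]
      rw [hr, hxx, sub_self, norm_zero] at hlt
      exact absurd hlt (not_lt.2 hδ0)
    have hrpos : 0 < r := hδpos.trans hlt
    have hp2 : Real.sqrt r ^ 2 = r := Real.sq_sqrt hr0
    have hd2 : Real.sqrt δ ^ 2 = δ := Real.sq_sqrt hδ0
    have hmass := mass_comparison hn hγ₁ hγ₂ hmono hsph hε' hM0 hνl' hM h₀ h₁ hc0
      (hcc x₀ ⟨hb₀, hs₀⟩ x₀ ⟨hb₀, hs₀⟩) (hcc x₀ ⟨hb₀, hs₀⟩ x₁ ⟨hb₁, hs₁⟩)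
      (Real.sqrt_pos.2 hrpos) (Real.sqrt_pos.2 hδpos) (Real.sqrt_le_sqrt hlt.le) hp2 hd2
    have hfinal := pow_le_of_mass_comparison hn hε' hc0 (Real.sqrt_pos.2 hrpos)
      (Real.sqrt_pos.2 hδpos) hmass
    rw [hp2, hd2] at hfinal
    refine hfinal.trans (mul_le_mul_of_nonneg_right ?_ hδ0)
    rw [hK]
    exact le_add_of_nonneg_right (by positivity)
end
end

section
/- Let n > 1. Under the hypotheses below (μ, ν symmetrically suitable Borel probability measures on Sⁿ, γ an optimal coupling of (μ, ν) for the quadratic cost, and t⁺, t⁻ the Gangbo–McCann outer and inner maps), the outer optimal map t⁺ is locally Hölder continuous with exponent 1/(4n−1) on the bivalent set S₂ := {x ∈ Sⁿ : t⁺(x) ≠ t⁻(x)}; that is, every point of S₂ has a relative neighborhood U ⊂ S₂ and a constant C such that |t⁺(x₁) − t⁺(x₀)| ≤ C|x₁ − x₀|^{1/(4n−1)} for all x₀, x₁ ∈ U. -/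
/-!
Near a bivalent point the outer map sends `x₀, x₁` to `y₀, y₁` with `(xᵢ, yᵢ)` in the support of
`γ` (`outer_mem_support`), and this support is monotone: exchanging targets near two pairs that
violate monotonicity would lower the cost (`support_monotone`). Write `d = ‖x₁ - x₀‖`,
`D = ‖y₁ - y₀‖` and let `m` be the direction of the midpoint of `x₀` and `x₁`. Nothing is to be
shown if `D ≤ d`.

Take a point of the chord `[y₀, y₁]` in its middle half. By strict convexity of the ball it lies
at depth about `D²` inside the sphere, so pushing it in the direction `m` reaches the sphere only
after a height `h` of at least a multiple of `D²`. If the resulting target receives mass from a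
source `u`, the two monotonicity inequalities against `(x₀, y₀)` and `(x₁, y₁)`, averaged with the
barycentric weights of the point, give `h ‖u - m‖² ≲ d D`, that is `‖u - m‖ ≲ ρ` with
`ρ² = d / D`. This survives perturbing the chord point by `D² ρ` in all directions
(`localization`).

Hence the mass of a tube of length `D` and width `D² ρ`, at least a multiple of `D (D² ρ)ⁿ⁻¹`
(`tube_measure`; the height of `y₀, y₁` over the hyperplane orthogonal to `m`, positive because
`⟪x, t⁺ x⟫ > 0`, keeps the projected chord long), comes from a cap of radius `17 ρ`, of mass
`O(ρⁿ)` (`sphereMeasure_ball_le`). So `D²ⁿ⁻¹ ≲ ρ`, and squaring gives `D⁴ⁿ⁻¹ ≲ d`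
(`pair_estimate`), which is the claimed exponent.
-/

open MeasureTheory Metric Set
open scoped RealInnerProductSpace ENNReal NNReal

noncomputable section

/-! ### Monotonicity of the support of an optimal plan -/

lemma swap_cost_lt {n : ℕ} {p q : Euc n × Euc n} (h : ⟪p.1 - q.1, p.2 - q.2⟫ < 0) :
    ENNReal.ofReal (‖p.1 - q.2‖ ^ 2) + ENNReal.ofReal (‖q.1 - p.2‖ ^ 2)
      < ENNReal.ofReal (‖p.1 - p.2‖ ^ 2) + ENNReal.ofReal (‖q.1 - q.2‖ ^ 2) := by
  rw [← ENNReal.ofReal_add (by positivity) (by positivity),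
    ← ENNReal.ofReal_add (by positivity) (by positivity)]
  have key : ‖p.1 - q.2‖ ^ 2 + ‖q.1 - p.2‖ ^ 2
      < ‖p.1 - p.2‖ ^ 2 + ‖q.1 - q.2‖ ^ 2 := by
    simp only [norm_sub_sq_real]
    simp only [inner_sub_left, inner_sub_right] at h
    linarith
  exact (ENNReal.ofReal_lt_ofReal_iff (lt_of_le_of_lt (by positivity) key)).2 key

set_option maxHeartbeats 1000000 in
/-- Exchanging targets between two sets on which every pair violates monotonicity strictly
decreases the cost, so for an optimal plan of finite cost one of the two sets is null. -/
lemma measure_eq_zero_of_violating {n : ℕ} {μ ν : Measure (Euc n)} {γ : Measure (Euc n × Euc n)}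
    (hopt : IsOptimalCoupling n μ ν γ) (hfin : transportCost n γ ≠ ⊤)
    {A B : Set (Euc n × Euc n)} (hA : MeasurableSet A) (hB : MeasurableSet B)
    (h : ∀ p ∈ A, ∀ q ∈ B, ⟪p.1 - q.1, p.2 - q.2⟫ < 0) : γ A = 0 ∨ γ B = 0 := by
  obtain ⟨⟨hprob, hm1, hm2⟩, hmin⟩ := hopt
  by_contra hne
  push Not at hne
  obtain ⟨hA0, hB0⟩ := hne
  have hdisj : Disjoint A B := by
    rw [Set.disjoint_left]
    intro p hpA hpB
    simpa using h p hpA p hpB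
  set γA := γ.restrict A with hγA
  set γB := γ.restrict B with hγB
  set γR := γ.restrict (A ∪ B)ᶜ with hγR
  have hsplit : γ = γR + (γA + γB) := by
    rw [hγR, hγA, hγB, ← Measure.restrict_union hdisj hB]
    exact (Measure.restrict_compl_add_restrict (hA.union hB)).symm
  have hγAu : γA univ = γ A := by simp [hγA]
  have hγBu : γB univ = γ B := by simp [hγB]
  have ha1 : γ A ≤ 1 := prob_le_one
  have hb1 : γ B ≤ 1 := prob_le_one
  set Φ : (Euc n × Euc n) × (Euc n × Euc n) → Euc n × Euc n := fun r => (r.1.1, r.2.2) with hΦ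
  set Ψ : (Euc n × Euc n) × (Euc n × Euc n) → Euc n × Euc n := fun r => (r.2.1, r.1.2) with hΨ
  have mΦ : Measurable Φ := by fun_prop
  have mΨ : Measurable Ψ := by fun_prop
  set π := γA.prod γB with hπ
  have hπ1 : π.map Prod.fst = γ B • γA := by rw [hπ, Measure.map_fst_prod, hγBu]
  have hπ2 : π.map Prod.snd = γ A • γB := by rw [hπ, Measure.map_snd_prod, hγAu]
  -- The competitor: mass `γ A * γ B` is taken from each of the two pieces and recoupled.
  set γ' := γR + ((1 - γ B) • γA + (1 - γ A) • γB) + (π.map Φ + π.map Ψ) with hγ'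
  have hAs : (1 - γ B) • γA + γ B • γA = γA := by
    rw [← add_smul, tsub_add_cancel_of_le hb1, one_smul]
  have hBs : (1 - γ A) • γB + γ A • γB = γB := by
    rw [← add_smul, tsub_add_cancel_of_le ha1, one_smul]
  have hsplit2 : γ = γR + ((1 - γ B) • γA + (1 - γ A) • γB) + (γ B • γA + γ A • γB) := by
    conv_lhs => rw [hsplit, ← hAs, ← hBs]
    abel
  have f1 : γ'.map Prod.fst = γ.map Prod.fst := by
    conv_rhs => rw [hsplit2, ← hπ1, ← hπ2]
    rw [hγ']
    simp only [Measure.map_add _ _ measurable_fst]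
    rw [Measure.map_map measurable_fst mΦ, Measure.map_map measurable_fst mΨ,
      Measure.map_map measurable_fst measurable_fst, Measure.map_map measurable_fst measurable_snd]
    rfl
  have f2 : γ'.map Prod.snd = γ.map Prod.snd := by
    conv_rhs => rw [hsplit2, ← hπ1, ← hπ2]
    rw [hγ']
    simp only [Measure.map_add _ _ measurable_snd]
    rw [Measure.map_map measurable_snd mΦ, Measure.map_map measurable_snd mΨ,
      Measure.map_map measurable_snd measurable_fst, Measure.map_map measurable_snd measurable_snd]
    congr 1
    exact add_comm _ _
  have hcoup : IsCoupling n μ ν γ' := by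
    refine ⟨⟨?_⟩, f1.trans hm1, f2.trans hm2⟩
    have : γ'.map Prod.fst univ = γ.map Prod.fst univ := by rw [f1]
    rw [Measure.map_apply measurable_fst MeasurableSet.univ,
      Measure.map_apply measurable_fst MeasurableSet.univ] at this
    simpa using this
  set c : Euc n × Euc n → ℝ≥0∞ := fun p => ENNReal.ofReal (‖p.1 - p.2‖ ^ 2) with hc
  have mc : Measurable c := by fun_prop
  have hle : transportCost n γ ≤ transportCost n γ' := hmin γ' hcoup
  have e1 : transportCost n γ =
      ∫⁻ p, c p ∂(γR + ((1 - γ B) • γA + (1 - γ A) • γB)) + ∫⁻ r, (c r.1 + c r.2) ∂π := by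
    have : ∫⁻ r, (c r.1 + c r.2) ∂π = ∫⁻ p, c p ∂(γ B • γA + γ A • γB) := by
      rw [lintegral_add_left (f := fun r : (Euc n × Euc n) × (Euc n × Euc n) => c r.1) (mc.comp measurable_fst), lintegral_add_measure, ← hπ1, ← hπ2,
        lintegral_map mc measurable_fst, lintegral_map mc measurable_snd]
    rw [this, ← lintegral_add_measure, ← hsplit2]
    rfl
  have e2 : transportCost n γ' =
      ∫⁻ p, c p ∂(γR + ((1 - γ B) • γA + (1 - γ A) • γB))
        + ∫⁻ r, (c (Φ r) + c (Ψ r)) ∂π := by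
    have : ∫⁻ r, (c (Φ r) + c (Ψ r)) ∂π = ∫⁻ p, c p ∂(π.map Φ + π.map Ψ) := by
      rw [lintegral_add_left (f := fun r => c (Φ r)) (mc.comp mΦ), lintegral_add_measure,
        lintegral_map mc mΦ, lintegral_map mc mΨ]
    rw [this, ← lintegral_add_measure]
    rfl
  have hfin' := hfin
  rw [e1, ENNReal.add_ne_top] at hfin'
  have hπ0 : π ≠ 0 := by
    intro h0
    have : π univ = 0 := by rw [h0]; simp
    rw [hπ, ← univ_prod_univ, Measure.prod_prod, hγAu, hγBu, mul_eq_zero] at this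
    tauto
  have hae : ∀ᵐ r ∂π, c (Φ r) + c (Ψ r) < c r.1 + c r.2 := by
    rw [hπ, hγA, hγB, Measure.prod_restrict]
    filter_upwards [ae_restrict_mem (hA.prod hB)] with r hr
    exact swap_cost_lt (h _ hr.1 _ hr.2)
  have hlt : ∫⁻ r, (c (Φ r) + c (Ψ r)) ∂π < ∫⁻ r, (c r.1 + c r.2) ∂π := by
    refine lintegral_strict_mono hπ0 (by fun_prop) ?_ hae
    refine ne_top_of_le_ne_top hfin'.2 (lintegral_mono_ae ?_)
    filter_upwards [hae] with r hr using hr.le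
  rw [e1, e2] at hle
  exact absurd hle (not_le.2 (ENNReal.add_lt_add_left hfin'.1 hlt))

/-! ### Hausdorff measure of subsets of the sphere -/

/-- The coordinates of a vector with respect to an orthonormal basis, the `0`-th one dropped:
the orthogonal projection along `b 0`, read with the sup norm in `ℝⁿ`. -/
def tangentCoords {n : ℕ} (b : OrthonormalBasis (Fin (n + 1)) ℝ (Euc n)) (u : Euc n) :
    Fin n → ℝ := fun i => ⟪b i.succ, u⟫

lemma tangentCoords_lipschitz {n : ℕ} (b : OrthonormalBasis (Fin (n + 1)) ℝ (Euc n)) :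
    LipschitzWith 1 (tangentCoords b) := by
  refine LipschitzWith.of_dist_le_mul fun u v => ?_
  rw [NNReal.coe_one, one_mul, dist_pi_le_iff dist_nonneg]
  intro i
  rw [Real.dist_eq, tangentCoords, tangentCoords, ← inner_sub_right, dist_eq_norm]
  refine (abs_real_inner_le_norm _ _).trans ?_
  simp

lemma norm_sq_eq_tangentCoords {n : ℕ} (b : OrthonormalBasis (Fin (n + 1)) ℝ (Euc n))
    (u : Euc n) : ‖u‖ ^ 2 = ⟪b 0, u⟫ ^ 2 + ∑ i, tangentCoords b u i ^ 2 := by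
  rw [← b.sum_sq_inner_right u, Fin.sum_univ_succ]
  rfl

lemma hausdorff_pi (n : ℕ) : (μH[(n : ℝ)] : Measure (Fin n → ℝ)) = volume := by
  have := hausdorffMeasure_pi_real (ι := Fin n)
  simpa using this

lemma volume_le_sphereMeasure {n : ℕ} (b : OrthonormalBasis (Fin (n + 1)) ℝ (Euc n))
    {N : Set (Euc n)} {Q : Set (Fin n → ℝ)}
    (h : ∀ a ∈ Q, ∃ y ∈ N, y ∈ unitSphere n ∧ tangentCoords b y = a) :
    volume Q ≤ sphereMeasure n N := by
  have hsub : Q ⊆ tangentCoords b '' (N ∩ unitSphere n) := by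
    intro a ha
    obtain ⟨y, hy, hyS, hya⟩ := h a ha
    exact ⟨y, ⟨hy, hyS⟩, hya⟩
  calc volume Q ≤ volume (tangentCoords b '' (N ∩ unitSphere n)) := measure_mono hsub
    _ = μH[(n : ℝ)] (tangentCoords b '' (N ∩ unitSphere n)) := by rw [hausdorff_pi]
    _ ≤ ((1 : ℝ≥0) : ℝ≥0∞) ^ (n : ℝ) * μH[(n : ℝ)] (N ∩ unitSphere n) :=
        (tangentCoords_lipschitz b).hausdorffMeasure_image_le (Nat.cast_nonneg n) _
    _ = μH[(n : ℝ)] (N ∩ unitSphere n) := by simp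
    _ ≤ sphereMeasure n N := Measure.le_restrict_apply _ _

/-- Points of the sphere at height at least `c > 0` above the hyperplane orthogonal to `b 0`
are controlled by their projections to that hyperplane. -/
lemma norm_sub_sq_le_tangent {n : ℕ} (b : OrthonormalBasis (Fin (n + 1)) ℝ (Euc n))
    {c : ℝ} (hc : 0 < c) {y₀ y₁ : Euc n} (h₀ : ‖y₀‖ = 1) (h₁ : ‖y₁‖ = 1)
    (hc₀ : c ≤ ⟪b 0, y₀⟫) (hc₁ : c ≤ ⟪b 0, y₁⟫) :
    ‖y₁ - y₀‖ ^ 2 ≤ (1 + 1 / c ^ 2) * ∑ i, tangentCoords b (y₁ - y₀) i ^ 2 := by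
  have hsub : ∀ i, tangentCoords b (y₁ - y₀) i = tangentCoords b y₁ i - tangentCoords b y₀ i :=
    fun i => inner_sub_right _ _ _
  have e₀ := norm_sq_eq_tangentCoords b y₀
  have e₁ := norm_sq_eq_tangentCoords b y₁
  rw [norm_sq_eq_tangentCoords b (y₁ - y₀)]
  set P := ∑ i, tangentCoords b (y₁ - y₀) i ^ 2 with hP
  set s := ∑ i, (tangentCoords b y₁ i + tangentCoords b y₀ i) ^ 2 with hs
  set t := ∑ i, (tangentCoords b (y₁ - y₀) i) * (tangentCoords b y₁ i + tangentCoords b y₀ i)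
    with ht
  have hcs : t ^ 2 ≤ P * s := Finset.sum_mul_sq_le_sq_mul_sq _ _ _
  have hP0 : 0 ≤ P := Finset.sum_nonneg fun i _ => sq_nonneg _
  have ht2 : t = ∑ i, tangentCoords b y₁ i ^ 2 - ∑ i, tangentCoords b y₀ i ^ 2 := by
    rw [ht, ← Finset.sum_sub_distrib]
    exact Finset.sum_congr rfl fun i _ => by rw [hsub]; ring
  have hs4 : s ≤ 4 := by
    have : s ≤ 2 * ∑ i, tangentCoords b y₁ i ^ 2 + 2 * ∑ i, tangentCoords b y₀ i ^ 2 := by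
      rw [hs, Finset.mul_sum, Finset.mul_sum, ← Finset.sum_add_distrib]
      exact Finset.sum_le_sum fun i _ => by
        nlinarith [sq_nonneg (tangentCoords b y₁ i - tangentCoords b y₀ i)]
    rw [h₀] at e₀
    rw [h₁] at e₁
    nlinarith [sq_nonneg ⟪b 0, y₀⟫, sq_nonneg ⟪b 0, y₁⟫]
  rw [inner_sub_right]
  rw [h₀] at e₀
  rw [h₁] at e₁
  set α := ⟪b 0, y₁⟫
  set β := ⟪b 0, y₀⟫
  have ht3 : (α - β) * (α + β) = -t := by rw [ht2]; nlinarith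
  have h4 : (α - β) ^ 2 * (4 * c ^ 2) ≤ 4 * P := by
    have h5 : 4 * c ^ 2 ≤ (α + β) ^ 2 := by nlinarith
    calc (α - β) ^ 2 * (4 * c ^ 2) ≤ (α - β) ^ 2 * (α + β) ^ 2 := by gcongr
      _ = t ^ 2 := by rw [← mul_pow, ht3, neg_sq]
      _ ≤ P * s := hcs
      _ ≤ P * 4 := by gcongr
      _ = 4 * P := by ring
  have h6 : (α - β) ^ 2 ≤ 1 / c ^ 2 * P := by
    rw [one_div, inv_mul_eq_div, le_div_iff₀ (by positivity)]
    linarith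
  linarith

lemma exists_basis_zero {n : ℕ} {m : Euc n} (hm : ‖m‖ = 1) :
    ∃ b : OrthonormalBasis (Fin (n + 1)) ℝ (Euc n), b 0 = m := by
  have hv : Orthonormal ℝ (({0} : Set (Fin (n + 1))).domRestrict (fun _ => m)) := by
    constructor
    · intro i; simpa using hm
    · intro i j hij
      exact absurd (Subsingleton.elim i j) hij
  obtain ⟨b, hb⟩ := hv.exists_orthonormalBasis_extension_of_card_eq (by simp)
  exact ⟨b, hb 0 rfl⟩

/-- Caps of radius at most `1` have measure `O(Rⁿ)`, because the projection to the tangent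
space at the centre has a Lipschitz inverse on such a cap. -/
lemma sphereMeasure_ball_le_of_le_one (n : ℕ) : ∃ C : ℝ, 0 < C ∧ ∀ m : Euc n, ‖m‖ = 1 →
    ∀ R : ℝ, 0 < R → R ≤ 1 →
      sphereMeasure n (ball m R) ≤ ENNReal.ofReal (C * R ^ n) := by
  set K : ℝ≥0 := 5 * (n + 1) with hK
  refine ⟨(K : ℝ) ^ n * 2 ^ n, by positivity, ?_⟩
  intro m hm R hR hR1
  obtain ⟨b, hb⟩ := exists_basis_zero hm
  set s := ball m R ∩ unitSphere n with hs
  have hheight : ∀ u ∈ s, 1 / 2 ≤ ⟪b 0, u⟫ := by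
    intro u hu
    have hu1 : ‖u‖ = 1 := by simpa [unitSphere] using hu.2
    have hd : ‖u - m‖ < R := by simpa [dist_eq_norm] using hu.1
    have := norm_sub_sq_real u m
    rw [hu1, hm] at this
    rw [hb, real_inner_comm]
    nlinarith [norm_nonneg (u - m)]
  have hanti : ∀ u ∈ s, ∀ v ∈ s, dist u v ≤ K * dist (tangentCoords b u) (tangentCoords b v) := by
    intro u hu v hv
    have hu1 : ‖u‖ = 1 := by simpa [unitSphere] using hu.2
    have hv1 : ‖v‖ = 1 := by simpa [unitSphere] using hv.2
    have h := norm_sub_sq_le_tangent b (c := 1 / 2) (by norm_num) hv1 hu1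
      (hheight v hv) (hheight u hu)
    set δ := dist (tangentCoords b u) (tangentCoords b v) with hδ
    have hi : ∀ i, tangentCoords b (u - v) i ^ 2 ≤ δ ^ 2 := by
      intro i
      have h1 : |tangentCoords b u i - tangentCoords b v i| ≤ δ := by
        rw [← Real.dist_eq]; exact dist_le_pi_dist _ _ i
      have h2 : tangentCoords b (u - v) i = tangentCoords b u i - tangentCoords b v i :=
        inner_sub_right _ _ _
      rw [h2, ← sq_abs]
      gcongr
    have hsum : ∑ i, tangentCoords b (u - v) i ^ 2 ≤ n * δ ^ 2 := by
      refine (Finset.sum_le_sum fun i _ => hi i).trans ?_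
      simp
    rw [dist_eq_norm]
    have hδ0 : 0 ≤ δ := dist_nonneg
    refine abs_le_of_sq_le_sq' ?_ (by positivity) |>.2
    have hKr : (K : ℝ) = 5 * (n + 1) := by simp [hK]
    rw [hKr]
    have hn0 : (0 : ℝ) ≤ n := Nat.cast_nonneg n
    have hn1 : (n : ℝ) ≤ (n + 1) ^ 2 := by nlinarith
    norm_num at h
    calc ‖u - v‖ ^ 2 ≤ 5 * (n * δ ^ 2) := by linarith
      _ ≤ 25 * ((n + 1) ^ 2 * δ ^ 2) := by
        have : (n : ℝ) * δ ^ 2 ≤ (n + 1) ^ 2 * δ ^ 2 := by gcongr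
        have : 0 ≤ (n : ℝ) * δ ^ 2 := by positivity
        linarith
      _ = (5 * (n + 1) * δ) ^ 2 := by ring
  have hinj : InjOn (tangentCoords b) s := by
    intro u hu v hv huv
    have := hanti u hu v hv
    rw [huv, dist_self, mul_zero] at this
    exact dist_le_zero.1 this
  set g := Function.invFunOn (tangentCoords b) s with hg
  have hleft : ∀ u ∈ s, g (tangentCoords b u) = u := fun u hu => hinj.leftInvOn_invFunOn hu
  have hlip : LipschitzOnWith K g (tangentCoords b '' s) := by
    refine LipschitzOnWith.of_dist_le_mul ?_
    rintro _ ⟨u, hu, rfl⟩ _ ⟨v, hv, rfl⟩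
    rw [hleft u hu, hleft v hv]
    exact hanti u hu v hv
  have himg : g '' (tangentCoords b '' s) = s := by
    rw [← image_comp]
    refine (image_congr fun u hu => ?_).trans (image_id s)
    exact hleft u hu
  have hbox : tangentCoords b '' s ⊆ closedBall (tangentCoords b m) R := by
    rintro _ ⟨u, hu, rfl⟩
    have := (tangentCoords_lipschitz b).dist_le_mul u m
    rw [NNReal.coe_one, one_mul] at this
    exact this.trans (mem_ball.1 hu.1).le
  have hvol : volume (closedBall (tangentCoords b m) R) = ENNReal.ofReal ((2 * R) ^ n) := by
    rw [Real.volume_pi_closedBall _ hR.le, Fintype.card_fin]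
  calc sphereMeasure n (ball m R) = μH[(n : ℝ)] s := Measure.restrict_apply measurableSet_ball
    _ = μH[(n : ℝ)] (g '' (tangentCoords b '' s)) := by rw [himg]
    _ ≤ (K : ℝ≥0∞) ^ (n : ℝ) * μH[(n : ℝ)] (tangentCoords b '' s) :=
        hlip.hausdorffMeasure_image_le (Nat.cast_nonneg n)
    _ = (K : ℝ≥0∞) ^ n * volume (tangentCoords b '' s) := by
        rw [hausdorff_pi, ENNReal.rpow_natCast]
    _ ≤ (K : ℝ≥0∞) ^ n * ENNReal.ofReal ((2 * R) ^ n) := by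
        rw [← hvol]; gcongr
    _ = ENNReal.ofReal ((K : ℝ) ^ n * 2 ^ n * R ^ n) := by
        rw [mul_assoc, ← mul_pow, ENNReal.ofReal_mul (by positivity),
          ENNReal.ofReal_pow (p := (K : ℝ)) (by positivity), ENNReal.ofReal_coe_nnreal]

lemma sphereMeasure_ball_le {n : ℕ} (hfin : sphereMeasure n univ ≠ ⊤) :
    ∃ C : ℝ, 0 < C ∧ ∀ m : Euc n, ‖m‖ = 1 →
    ∀ R : ℝ, 0 < R → sphereMeasure n (ball m R) ≤ ENNReal.ofReal (C * R ^ n) := by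
  obtain ⟨C, hC, h⟩ := sphereMeasure_ball_le_of_le_one n
  refine ⟨C + (sphereMeasure n univ).toReal, by positivity, ?_⟩
  intro m hm R hR
  have h0 : 0 ≤ (sphereMeasure n univ).toReal := ENNReal.toReal_nonneg
  rcases le_total R 1 with hR1 | hR1
  · refine (h m hm R hR hR1).trans (ENNReal.ofReal_le_ofReal ?_)
    gcongr
    linarith
  · refine (measure_mono (subset_univ _)).trans ?_
    refine ENNReal.le_ofReal_iff_toReal_le hfin (by positivity) |>.2 ?_
    have : 1 ≤ R ^ n := one_le_pow₀ hR1
    nlinarith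

/-- A nonempty relatively open subset of the sphere has positive measure. -/
lemma sphereMeasure_pos {n : ℕ} {V : Set (Euc n)} (hV : IsOpen V) {m : Euc n}
    (hm : m ∈ unitSphere n) (hmV : m ∈ V) : 0 < sphereMeasure n V := by
  have hm1 : ‖m‖ = 1 := by simpa [unitSphere] using hm
  obtain ⟨b, hb⟩ := exists_basis_zero hm1
  set v : (Fin n → ℝ) → Euc n := fun a => ∑ i, a i • b i.succ with hv
  set f : (Fin n → ℝ) → Euc n := fun a => v a + √(1 - ‖v a‖ ^ 2) • m with hf
  have hvc : Continuous v := by fun_prop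
  have hfc : Continuous f := by fun_prop
  have hv0 : v 0 = 0 := by simp [hv]
  have hf0 : f 0 = m := by simp [hf, hv0]
  have hQ : IsOpen (f ⁻¹' V ∩ v ⁻¹' ball 0 1) :=
    (hV.preimage hfc).inter (isOpen_ball.preimage hvc)
  have hpos : 0 < volume (f ⁻¹' V ∩ v ⁻¹' ball 0 1) := by
    refine hQ.measure_pos _ ⟨0, ?_, ?_⟩
    · simpa [hf0] using hmV
    · simp [hv0]
  refine hpos.trans_le (volume_le_sphereMeasure b ?_)
  rintro a ⟨ha1, ha2⟩
  have horth : ⟪v a, m⟫ = 0 := by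
    simp only [hv, sum_inner, inner_smul_left]
    refine Finset.sum_eq_zero fun i _ => ?_
    rw [← hb, b.inner_eq_zero (Fin.succ_ne_zero i), mul_zero]
  have ha2' : ‖v a‖ < 1 := by simpa using ha2
  refine ⟨f a, ha1, ?_, ?_⟩
  · have : ‖f a‖ ^ 2 = 1 := by
      rw [hf]
      simp only
      rw [norm_add_sq_real, inner_smul_right, horth, norm_smul, hm1, Real.norm_eq_abs,
        mul_one, sq_abs, Real.sq_sqrt (by nlinarith [norm_nonneg (v a)])]
      ring
    have h1 : ‖f a‖ = 1 := (pow_eq_one_iff_of_nonneg (norm_nonneg _) two_ne_zero).1 this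
    simpa [unitSphere] using h1
  · ext i
    simp only [tangentCoords, hf, inner_add_right, inner_smul_right]
    rw [← hb, b.inner_eq_zero (Fin.succ_ne_zero i), mul_zero, add_zero]
    simp only [hv, inner_sum, inner_smul_right, b.inner_eq_ite]
    simp

/-! ### The geometric estimate -/

section Geometry

variable {E : Type*} [NormedAddCommGroup E] [InnerProductSpace ℝ E]

/-- Pushing a point `v` of the unit ball in a unit direction `m` reaches the sphere after a
height `h` comparable at least to `1 - ‖v‖²`. -/
lemma exists_lift {v m : E} (hm : ‖m‖ = 1) (hv : ‖v‖ ≤ 1) :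
    ∃ h : ℝ, 0 ≤ h ∧ h ≤ 2 ∧ ‖v + h • m‖ = 1 ∧ 1 - ‖v‖ ^ 2 ≤ 4 * h := by
  have hcont : ContinuousOn (fun h : ℝ => ‖v + h • m‖) (Icc 0 2) := by fun_prop
  have h2 : 1 ≤ ‖v + (2 : ℝ) • m‖ := by
    have : ‖(2 : ℝ) • m‖ ≤ ‖v + (2 : ℝ) • m‖ + ‖v‖ := by
      simpa using norm_sub_le (v + (2 : ℝ) • m) v
    rw [norm_smul, hm] at this
    norm_num at this
    linarith
  have hmem : (1 : ℝ) ∈ Icc ‖v + (0 : ℝ) • m‖ ‖v + (2 : ℝ) • m‖ := ⟨by simpa using hv, h2⟩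
  obtain ⟨h, ⟨h0, hle⟩, hh⟩ := intermediate_value_Icc (by norm_num : (0 : ℝ) ≤ 2) hcont hmem
  simp only at hh
  refine ⟨h, h0, hle, hh, ?_⟩
  have e := norm_add_sq_real v (h • m)
  rw [hh, inner_smul_right, norm_smul, hm, Real.norm_eq_abs, mul_one, sq_abs] at e
  have hin : ⟪v, m⟫ ≤ 1 := by
    have := real_inner_le_norm v m
    rw [hm] at this
    linarith
  nlinarith [mul_le_mul_of_nonneg_left hin h0, mul_le_mul_of_nonneg_left hle h0]

set_option maxHeartbeats 1000000 in
/-- The localization estimate. Let `m` be the direction of the midpoint of `x₀` and `x₁`, and let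
`y` be the point of the segment `[y₀, y₁]` at parameter `θ`, raised by `h` in the direction `m` and
perturbed by `ζ`. If `(u, y)` is monotone with respect to `(x₀, y₀)` and `(x₁, y₁)`, then `u` is
close to `m`: averaging the two monotonicity inequalities with weights `1 - θ` and `θ` leaves
`h ⟪u - w, m⟫`, which is about `-h ‖u - m‖² / 2`, plus small errors. -/
lemma localization {x₀ x₁ u m y₀ y₁ y ζ : E} {θ h ρ s : ℝ}
    (hx₀ : ‖x₀‖ = 1) (hx₁ : ‖x₁‖ = 1) (hu : ‖u‖ = 1) (hm : ‖m‖ = 1)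
    (hs0 : 0 < s) (hs : x₀ + x₁ = (2 * s) • m)
    (hθ0 : 0 ≤ θ) (hθ1 : θ ≤ 1)
    (hD0 : 0 < ‖y₁ - y₀‖) (hD2 : ‖y₁ - y₀‖ ≤ 2) (hdD : ‖x₁ - x₀‖ ≤ ‖y₁ - y₀‖)
    (hρ0 : 0 ≤ ρ) (hρ : ρ ^ 2 * ‖y₁ - y₀‖ = ‖x₁ - x₀‖)
    (hh : ‖y₁ - y₀‖ ^ 2 / 64 ≤ h) (hh2 : h ≤ 2)
    (hζ : ‖ζ‖ ≤ ‖y₁ - y₀‖ ^ 2 * ρ / 32)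
    (hy : y = (1 - θ) • y₀ + θ • y₁ + ζ + h • m)
    (h₀ : 0 ≤ ⟪u - x₀, y - y₀⟫) (h₁ : 0 ≤ ⟪u - x₁, y - y₁⟫) :
    ‖u - m‖ ≤ 16 * ρ := by
  set D := ‖y₁ - y₀‖ with hD
  set d := ‖x₁ - x₀‖ with hd
  set w := (1 - θ) • x₀ + θ • x₁ with hw
  set R := ‖u - m‖ with hR
  have hR0 : 0 ≤ R := norm_nonneg _
  have hd0 : 0 ≤ d := norm_nonneg _
  have hh0 : 0 ≤ h := le_trans (by positivity) hh
  have ident : (1 - θ) * ⟪u - x₀, y - y₀⟫ + θ * ⟪u - x₁, y - y₁⟫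
      = ⟪u - w, ζ⟫ + h * ⟪u - w, m⟫ + θ * (1 - θ) * ⟪x₁ - x₀, y₁ - y₀⟫ := by
    rw [hy, hw]
    simp only [inner_sub_left, inner_sub_right, inner_add_left, inner_add_right,
      inner_smul_left, inner_smul_right, RCLike.conj_to_real]
    ring
  have hpos : 0 ≤ (1 - θ) * ⟪u - x₀, y - y₀⟫ + θ * ⟪u - x₁, y - y₁⟫ := by
    have : 0 ≤ 1 - θ := by linarith
    positivity
  -- `m` is orthogonal to `x₁ - x₀`, so every point of the chord has the same height `s`.
  have par := parallelogram_law_with_norm ℝ x₀ x₁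
  rw [hs, norm_smul, hm, hx₀, hx₁, norm_sub_rev x₀ x₁, ← hd, Real.norm_eq_abs,
    abs_of_nonneg (by positivity)] at par
  have hsd : s ^ 2 = 1 - d ^ 2 / 4 := by nlinarith
  have hs1 : s ≤ 1 := by
    refine (abs_le_of_sq_le_sq' (b := 1) ?_ zero_le_one).2
    linarith [sq_nonneg d]
  have hsd' : 1 - d ^ 2 / 4 ≤ s := by
    rw [← hsd, sq]
    exact mul_le_of_le_one_left hs0.le hs1
  have sum_m : ⟪x₀, m⟫ + ⟪x₁, m⟫ = 2 * s := by
    rw [← inner_add_left, hs, inner_smul_left, real_inner_self_eq_norm_sq, hm]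
    simp
  have diff_m : s * (⟪x₁, m⟫ - ⟪x₀, m⟫) = 0 := by
    have : ⟪x₁ - x₀, x₀ + x₁⟫ = 0 := by
      rw [inner_sub_left, inner_add_right, inner_add_right, real_inner_self_eq_norm_sq,
        real_inner_self_eq_norm_sq, hx₀, hx₁, real_inner_comm x₁ x₀]
      ring
    rw [hs, inner_smul_right, inner_sub_left] at this
    linarith
  have hwm : ⟪w, m⟫ = s := by
    rw [hw, inner_add_left, inner_smul_left, inner_smul_left]
    simp only [RCLike.conj_to_real]
    have : ⟪x₁, m⟫ - ⟪x₀, m⟫ = 0 := (mul_eq_zero.1 diff_m).resolve_left hs0.ne'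
    have h1 : ⟪x₀, m⟫ = s := by linarith
    have h2 : ⟪x₁, m⟫ = s := by linarith
    rw [h1, h2]
    ring
  have hw1 : ‖w‖ ≤ 1 := by
    calc ‖w‖ ≤ ‖(1 - θ) • x₀‖ + ‖θ • x₁‖ := norm_add_le _ _
      _ = 1 := by
        rw [norm_smul, norm_smul, hx₀, hx₁, Real.norm_of_nonneg hθ0,
          Real.norm_of_nonneg (by linarith)]
        ring
  have hmw : ‖m - w‖ ≤ d := by
    have e := norm_sub_sq_real m w
    rw [hm, real_inner_comm, hwm] at e
    have hw2 : ‖w‖ ^ 2 ≤ 1 := pow_le_one₀ (norm_nonneg w) hw1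
    have : ‖m - w‖ ^ 2 ≤ d ^ 2 := by linarith [sq_nonneg d]
    exact (abs_le_of_sq_le_sq' this hd0).2
  have hum : ⟪u, m⟫ = 1 - R ^ 2 / 2 := by
    have e := norm_sub_sq_real u m
    rw [hm, hu, ← hR] at e
    linarith
  have t1 : ⟪u - w, ζ⟫ ≤ (R + d) * (D ^ 2 * ρ / 32) := by
    have h1 : ‖u - w‖ ≤ R + d := by
      calc ‖u - w‖ = ‖(u - m) + (m - w)‖ := by congr 1; abel
        _ ≤ R + d := (norm_add_le _ _).trans (by linarith)
    calc ⟪u - w, ζ⟫ ≤ ‖u - w‖ * ‖ζ‖ := real_inner_le_norm _ _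
      _ ≤ (R + d) * (D ^ 2 * ρ / 32) := by gcongr
  have t2 : h * ⟪u - w, m⟫ ≤ - (h * R ^ 2 / 2) + d ^ 2 / 2 := by
    rw [inner_sub_left, hum, hwm]
    have h1 : h * (1 - s) ≤ 2 * (d ^ 2 / 4) := by
      have : 0 ≤ 1 - s := by linarith
      gcongr
      linarith
    linarith
  have t3 : θ * (1 - θ) * ⟪x₁ - x₀, y₁ - y₀⟫ ≤ d * D / 4 := by
    have h1 : ⟪x₁ - x₀, y₁ - y₀⟫ ≤ d * D := real_inner_le_norm _ _
    have h2 : θ * (1 - θ) ≤ 1 / 4 := by nlinarith [sq_nonneg (θ - 1 / 2)]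
    have h3 : 0 ≤ θ * (1 - θ) := mul_nonneg hθ0 (by linarith)
    calc θ * (1 - θ) * ⟪x₁ - x₀, y₁ - y₀⟫ ≤ θ * (1 - θ) * (d * D) := by gcongr
      _ ≤ 1 / 4 * (d * D) := by gcongr
      _ = d * D / 4 := by ring
  have hρ1 : ρ ≤ 1 := by
    by_contra! hlt
    have h1 : 1 < ρ ^ 2 := one_lt_pow₀ hlt two_ne_zero
    have : 1 * D < ρ ^ 2 * D := mul_lt_mul_of_pos_right h1 hD0
    linarith
  have t4 : d * (D ^ 2 * ρ / 32) ≤ d * D / 16 := by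
    have h1 : D * (D * ρ) ≤ D * (2 * 1) := by gcongr
    have h2 : d * (D * (D * ρ)) ≤ d * (D * (2 * 1)) := by gcongr
    linarith
  have t5 : d ^ 2 / 2 ≤ d * D / 2 := by
    rw [sq]
    gcongr
  have t6 : D ^ 2 / 64 * R ^ 2 ≤ h * R ^ 2 := by gcongr
  have main : D ^ 2 * R ^ 2 / 128 ≤ R * (D ^ 2 * ρ / 32) + d * D := by
    have h1 : 0 ≤ d * D := by positivity
    linarith
  have main2 : D ^ 2 * R ^ 2 ≤ D ^ 2 * (4 * R * ρ + 128 * ρ ^ 2) := by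
    rw [← hρ] at main
    linarith
  have main3 : R ^ 2 ≤ 4 * R * ρ + 128 * ρ ^ 2 := le_of_mul_le_mul_left main2 (by positivity)
  by_contra! hlt
  nlinarith [mul_nonneg hR0 hρ0]

end Geometry

/-! ### A tube of raised segment points has large measure -/

lemma exists_basis_pair {n : ℕ} {m e : Euc n} (hm : ‖m‖ = 1) (he : ‖e‖ = 1)
    (hme : ⟪m, e⟫ = 0) (j : Fin n) :
    ∃ b : OrthonormalBasis (Fin (n + 1)) ℝ (Euc n), b 0 = m ∧ b j.succ = e := by
  have hj : j.succ ≠ 0 := Fin.succ_ne_zero j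
  have hv : Orthonormal ℝ (({0, j.succ} : Set (Fin (n + 1))).domRestrict
      (fun i => if i = 0 then m else e)) := by
    constructor
    · rintro ⟨i, hi⟩
      rcases hi with rfl | hi
      · simpa using hm
      · rw [mem_singleton_iff] at hi
        subst hi
        simpa [hj] using he
    · rintro ⟨i, hi⟩ ⟨k, hk⟩ hik
      have hik' : i ≠ k := fun h => hik (Subtype.ext h)
      rcases hi with rfl | hi <;> rcases hk with rfl | hk
      · exact absurd rfl hik'
      · rw [mem_singleton_iff] at hk
        subst hk
        simpa [hj] using hme
      · rw [mem_singleton_iff] at hi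
        subst hi
        simpa [hj, real_inner_comm] using hme
      · exact absurd (hi.trans hk.symm) hik'
  obtain ⟨b, hb⟩ := hv.exists_orthonormalBasis_extension_of_card_eq (by simp)
  refine ⟨b, ?_, ?_⟩
  · simpa using hb 0 (by simp)
  · simpa [hj] using hb j.succ (by simp)

lemma norm_segment_sq {n : ℕ} {y₀ y₁ : Euc n} (h₀ : ‖y₀‖ = 1) (h₁ : ‖y₁‖ = 1) (θ : ℝ) :
    ‖(1 - θ) • y₀ + θ • y₁‖ ^ 2 = 1 - θ * (1 - θ) * ‖y₁ - y₀‖ ^ 2 := by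
  rw [norm_add_sq_real, norm_sub_sq_real, norm_smul, norm_smul, inner_smul_left,
    inner_smul_right, h₀, h₁, real_inner_comm y₀ y₁, Real.norm_eq_abs, Real.norm_eq_abs,
    mul_one, mul_one, sq_abs, sq_abs]
  simp only [RCLike.conj_to_real]
  ring

set_option maxHeartbeats 2000000 in
/-- If a set contains all unit vectors that arise from points of the segment `[y₀, y₁]` by a
perturbation of size `‖y₁ - y₀‖² ρ / 32` and a lift in the direction `m` of height at least
`‖y₁ - y₀‖² / 64`, then its projection along `m` contains a box, around the middle half of the
segment, with one side comparable to `‖y₁ - y₀‖` and the others comparable to `‖y₁ - y₀‖² ρ`. -/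
lemma tube_measure {n : ℕ} (hn : 1 < n) {c : ℝ} (hc : 0 < c) {m y₀ y₁ : Euc n}
    (hm : ‖m‖ = 1) (h₀ : ‖y₀‖ = 1) (h₁ : ‖y₁‖ = 1) (hc₀ : c ≤ ⟪m, y₀⟫) (hc₁ : c ≤ ⟪m, y₁⟫)
    (hD0 : 0 < ‖y₁ - y₀‖) {ρ : ℝ} (hρ0 : 0 < ρ) (hρ1 : ρ ≤ 1) {N : Set (Euc n)}
    (hN : ∀ (θ h : ℝ) (ζ y : Euc n), 0 ≤ θ → θ ≤ 1 → ‖ζ‖ ≤ ‖y₁ - y₀‖ ^ 2 * ρ / 32 →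
      ‖y₁ - y₀‖ ^ 2 / 64 ≤ h → h ≤ 2 → ‖y‖ = 1 →
      y = (1 - θ) • y₀ + θ • y₁ + ζ + h • m → y ∈ N) :
    ENNReal.ofReal ((‖y₁ - y₀‖ / (2 * (1 + 1 / c))) * (‖y₁ - y₀‖ ^ 2 * ρ / (16 * n)) ^ (n - 1))
      ≤ sphereMeasure n N := by
  set D := ‖y₁ - y₀‖ with hD
  have hn0 : (0 : ℝ) < n := by exact_mod_cast (by lia : 0 < n)
  set β := ⟪m, y₁ - y₀⟫ with hβ
  set z := y₁ - y₀ - β • m with hz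
  set p := ‖z‖ with hp
  have hmm : ⟪m, m⟫ = 1 := by rw [real_inner_self_eq_norm_sq, hm]; norm_num
  have hmz : ⟪m, z⟫ = 0 := by
    rw [hz, inner_sub_right, inner_smul_right, hmm, ← hβ]
    ring
  have hyz : y₁ - y₀ = z + β • m := by rw [hz]; abel
  have hp2 : D ^ 2 = β ^ 2 + p ^ 2 := by
    rw [hD, hyz, norm_add_sq_real, inner_smul_right, real_inner_comm, hmz, norm_smul, hm,
      Real.norm_eq_abs, mul_one, sq_abs]
    ring
  have hDp : D ≤ (1 + 1 / c) * p := by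
    obtain ⟨b, hb⟩ := exists_basis_zero hm
    have h := norm_sub_sq_le_tangent b hc h₀ h₁ (by rwa [hb]) (by rwa [hb])
    have h' := norm_sq_eq_tangentCoords b (y₁ - y₀)
    rw [hb, ← hβ, ← hD] at h'
    rw [← hD] at h
    have hS : ∑ i, tangentCoords b (y₁ - y₀) i ^ 2 = p ^ 2 := by linarith
    rw [hS] at h
    have hp0 : 0 ≤ p := norm_nonneg _
    refine (abs_le_of_sq_le_sq' ?_ (by positivity)).2
    refine h.trans ?_
    rw [mul_pow]
    gcongr
    have : 0 < 1 / c := by positivity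
    rw [← one_div_pow]
    nlinarith
  have hp0 : 0 < p := by
    rcases eq_or_lt_of_le (norm_nonneg z) with h | h
    · rw [hp, ← h, mul_zero] at hDp
      linarith
    · exact h
  set e := p⁻¹ • z with he
  have he1 : ‖e‖ = 1 := by
    rw [he, norm_smul, norm_inv, Real.norm_of_nonneg hp0.le, ← hp, inv_mul_cancel₀ hp0.ne']
  have hme : ⟪m, e⟫ = 0 := by rw [he, inner_smul_right, hmz, mul_zero]
  set j : Fin n := ⟨0, by lia⟩ with hj
  obtain ⟨b, hb0, hbj⟩ := exists_basis_pair hm he1 hme j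
  have hyy : y₁ - y₀ = p • e + β • m := by
    rw [he, smul_smul, mul_inv_cancel₀ hp0.ne', one_smul]
    exact hyz
  have hcoord : ∀ i, ⟪b i.succ, y₁ - y₀⟫ = if i = j then p else 0 := by
    intro i
    rw [hyy, ← hbj, ← hb0, inner_add_right, inner_smul_right, inner_smul_right,
      b.inner_eq_zero (Fin.succ_ne_zero i), mul_zero, add_zero, b.inner_eq_ite]
    by_cases hij : i = j
    · simp [hij]
    · simp [hij]
  set a₀ := tangentCoords b y₀ with ha₀
  set δ := D ^ 2 * ρ / (32 * n) with hδ
  have hδ0 : 0 < δ := by positivity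
  set lo : Fin n → ℝ := fun i => a₀ i + if i = j then p / 4 else -δ with hlo
  set hi : Fin n → ℝ := fun i => a₀ i + if i = j then 3 * p / 4 else δ with hhi
  have hvol : volume (Icc lo hi) = ENNReal.ofReal (p / 2 * (2 * δ) ^ (n - 1)) := by
    rw [Real.volume_Icc_pi, ENNReal.ofReal_mul (by positivity), ENNReal.ofReal_pow (by positivity),
      ← Finset.mul_prod_erase Finset.univ _ (Finset.mem_univ j)]
    congr 1
    · simp only [hlo, hhi, if_true]
      congr 1
      ring
    · rw [Finset.prod_congr rfl (g := fun _ => ENNReal.ofReal (2 * δ))]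
      · simp [Finset.card_erase_of_mem]
      · intro i hi'
        simp only [hlo, hhi, if_neg (Finset.ne_of_mem_erase hi')]
        congr 1
        ring
  have hbox : volume (Icc lo hi) ≤ sphereMeasure n N := by
    refine volume_le_sphereMeasure b ?_
    intro a ha
    set θ := (a j - a₀ j) / p with hθ
    have haj : a j = a₀ j + θ * p := by rw [hθ]; field_simp; ring
    have hlo' := ha.1 j
    have hhi' := ha.2 j
    simp only [hlo, hhi, if_true] at hlo' hhi'
    have hθ1 : 1 / 4 ≤ θ := by
      rw [hθ, le_div_iff₀ hp0]; linarith
    have hθ2 : θ ≤ 3 / 4 := by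
      rw [hθ, div_le_iff₀ hp0]; linarith
    set yc := (1 - θ) • y₀ + θ • y₁ with hyc
    have hycc : ∀ i, ⟪b i.succ, yc⟫ = a₀ i + if i = j then θ * p else 0 := by
      intro i
      have : yc = y₀ + θ • (y₁ - y₀) := by rw [hyc]; module
      rw [this, inner_add_right, inner_smul_right, hcoord]
      by_cases hij : i = j <;> simp [hij, ha₀, tangentCoords]
    have hdev : ∀ i, |a i - ⟪b i.succ, yc⟫| ≤ δ := by
      intro i
      rw [hycc]
      by_cases hij : i = j
      · subst hij
        simp only [if_true]
        rw [haj, sub_self, abs_zero]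
        exact hδ0.le
      · have h1 := ha.1 i
        have h2 := ha.2 i
        simp only [hlo, hhi, if_neg hij] at h1 h2 ⊢
        rw [abs_le]
        constructor <;> linarith
    set ζ : Euc n := ∑ i, (a i - ⟪b i.succ, yc⟫) • b i.succ with hζ
    have hζn : ‖ζ‖ ≤ D ^ 2 * ρ / 32 := by
      calc ‖ζ‖ ≤ ∑ i : Fin n, ‖(a i - ⟪b i.succ, yc⟫) • b i.succ‖ := norm_sum_le _ _
        _ ≤ ∑ _i : Fin n, δ := by
            refine Finset.sum_le_sum fun i _ => ?_
            rw [norm_smul, b.norm_eq_one, mul_one]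
            exact hdev i
        _ = D ^ 2 * ρ / 32 := by
            rw [Finset.sum_const, Finset.card_univ, Fintype.card_fin, nsmul_eq_mul, hδ]
            field_simp
    have hD2 : D ≤ 2 := by
      have := norm_sub_le y₁ y₀
      rw [h₀, h₁] at this
      linarith
    have hζD : ‖ζ‖ ≤ D ^ 2 / 32 := by
      refine hζn.trans ?_
      have : D ^ 2 * ρ ≤ D ^ 2 * 1 := by gcongr
      linarith
    have hyc2 := norm_segment_sq h₀ h₁ θ
    rw [← hyc, ← hD] at hyc2
    have hθθ : 3 / 16 ≤ θ * (1 - θ) := by nlinarith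
    have hycle : ‖yc‖ ^ 2 ≤ 1 - 3 / 16 * D ^ 2 := by
      have : 3 / 16 * D ^ 2 ≤ θ * (1 - θ) * D ^ 2 := by gcongr
      linarith
    have hyc1 : ‖yc‖ ≤ 1 := by
      refine (abs_le_of_sq_le_sq' (b := 1) ?_ zero_le_one).2
      linarith [sq_nonneg D]
    have hv2 : ‖yc + ζ‖ ^ 2 ≤ 1 - 3 / 32 * D ^ 2 := by
      have h1 : ‖yc + ζ‖ ≤ ‖yc‖ + ‖ζ‖ := norm_add_le _ _
      have hζ1 : ‖ζ‖ ≤ 1 := by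
        have : D ^ 2 ≤ 2 ^ 2 := by gcongr
        linarith
      have h2 : ‖yc + ζ‖ ^ 2 ≤ (‖yc‖ + ‖ζ‖) ^ 2 := by gcongr
      have h3 : ‖yc‖ * ‖ζ‖ ≤ 1 * ‖ζ‖ := by gcongr
      have h4 : ‖ζ‖ * ‖ζ‖ ≤ 1 * ‖ζ‖ := by gcongr
      have h5 : (‖yc‖ + ‖ζ‖) ^ 2 = ‖yc‖ ^ 2 + 2 * (‖yc‖ * ‖ζ‖) + ‖ζ‖ * ‖ζ‖ := by ring
      linarith
    have hv1 : ‖yc + ζ‖ ≤ 1 := by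
      refine (abs_le_of_sq_le_sq' (b := 1) ?_ zero_le_one).2
      linarith [sq_nonneg D]
    obtain ⟨h, hh0, hh2, hh1, hh4⟩ := exists_lift hm hv1
    refine ⟨yc + ζ + h • m, ?_, by simpa [unitSphere] using hh1, ?_⟩
    · refine hN θ h ζ _ (by linarith) (by linarith) hζn ?_ hh2 hh1 rfl
      linarith [sq_nonneg D]
    · ext i
      simp only [tangentCoords, inner_add_right, inner_smul_right]
      rw [← hb0, b.inner_eq_zero (Fin.succ_ne_zero i), mul_zero, add_zero, hζ]
      simp only [inner_sum, inner_smul_right, b.inner_eq_ite]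
      simp
  refine le_trans ?_ hbox
  rw [hvol]
  refine ENNReal.ofReal_le_ofReal ?_
  have e1 : 2 * δ = D ^ 2 * ρ / (16 * n) := by rw [hδ]; field_simp; norm_num
  rw [e1]
  have e2 : D / (2 * (1 + 1 / c)) ≤ p / 2 := by
    rw [div_le_div_iff₀ (by positivity) (by positivity)]
    linarith
  gcongr

/-! ### The support of the plan -/

lemma isClosed_unitSphere (n : ℕ) : IsClosed (unitSphere n) := isClosed_sphere

lemma isCompact_unitSphere (n : ℕ) : IsCompact (unitSphere n) := isCompact_sphere 0 1

lemma norm_of_mem_unitSphere {n : ℕ} {x : Euc n} (hx : x ∈ unitSphere n) : ‖x‖ = 1 := by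
  simpa [unitSphere] using hx

lemma measure_compl_unitSphere {n : ℕ} {μ : Measure (Euc n)} {a : ℝ≥0∞}
    (h : μ ≤ a • sphereMeasure n) : μ (unitSphere n)ᶜ = 0 := by
  have h1 := h (unitSphere n)ᶜ
  rw [Measure.smul_apply, sphereMeasure,
    Measure.restrict_apply (isClosed_unitSphere n).measurableSet.compl] at h1
  simpa using h1

lemma ae_mem_spheres {n : ℕ} {μ ν : Measure (Euc n)} {γ : Measure (Euc n × Euc n)}
    (hsuit : SymmetricallySuitable n μ ν) (hcoup : IsCoupling n μ ν γ) :
    ∀ᵐ p ∂γ, p ∈ unitSphere n ×ˢ unitSphere n := by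
  obtain ⟨_, _, ε, _, _, _, hμ, _, hν⟩ := hsuit
  obtain ⟨_, h1, h2⟩ := hcoup
  have hS := (isClosed_unitSphere n).measurableSet
  have a1 : ∀ᵐ p ∂γ, p.1 ∈ unitSphere n := by
    have := measure_compl_unitSphere hμ
    rw [← h1, Measure.map_apply measurable_fst hS.compl] at this
    exact this
  have a2 : ∀ᵐ p ∂γ, p.2 ∈ unitSphere n := by
    have := measure_compl_unitSphere hν
    rw [← h2, Measure.map_apply measurable_snd hS.compl] at this
    exact this
  filter_upwards [a1, a2] with p hp1 hp2 using ⟨hp1, hp2⟩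

lemma transportCost_ne_top {n : ℕ} {μ ν : Measure (Euc n)} {γ : Measure (Euc n × Euc n)}
    (hsuit : SymmetricallySuitable n μ ν) (hcoup : IsCoupling n μ ν γ) :
    transportCost n γ ≠ ⊤ := by
  have hprob := hcoup.1
  have hle : transportCost n γ ≤ ∫⁻ _p, ENNReal.ofReal (2 ^ 2) ∂γ := by
    refine lintegral_mono_ae ?_
    filter_upwards [ae_mem_spheres hsuit hcoup] with p hp
    refine ENNReal.ofReal_le_ofReal ?_
    have h1 := norm_sub_le p.1 p.2
    rw [norm_of_mem_unitSphere hp.1, norm_of_mem_unitSphere hp.2] at h1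
    gcongr
    linarith
  refine ne_top_of_le_ne_top ?_ hle
  simp

lemma support_subset {n : ℕ} {μ ν : Measure (Euc n)} {γ : Measure (Euc n × Euc n)}
    (hsuit : SymmetricallySuitable n μ ν) (hcoup : IsCoupling n μ ν γ) :
    γ.support ⊆ unitSphere n ×ˢ unitSphere n :=
  Measure.support_subset_of_isClosed ((isClosed_unitSphere n).prod (isClosed_unitSphere n))
    (ae_mem_spheres hsuit hcoup)

lemma isCompact_support {n : ℕ} {μ ν : Measure (Euc n)} {γ : Measure (Euc n × Euc n)}
    (hsuit : SymmetricallySuitable n μ ν) (hcoup : IsCoupling n μ ν γ) :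
    IsCompact γ.support :=
  ((isCompact_unitSphere n).prod (isCompact_unitSphere n)).of_isClosed_subset
    Measure.isClosed_support (support_subset hsuit hcoup)

/-- Since the marginals charge every relatively open subset of the sphere, the support of the
plan projects onto the sphere. -/
lemma exists_mem_support {n : ℕ} {γ : Measure (Euc n × Euc n)} (hK : IsCompact γ.support)
    {f : Euc n × Euc n → Euc n} (hf : Continuous f) {ε : ℝ≥0∞} (hε : 0 < ε)
    (h : ε • sphereMeasure n ≤ γ.map f) {x : Euc n} (hx : x ∈ unitSphere n) :
    ∃ p ∈ γ.support, f p = x := by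
  by_contra hne
  have hV : IsOpen (f '' γ.support)ᶜ := (hK.image hf).isClosed.isOpen_compl
  have hpos := sphereMeasure_pos hV hx (fun ⟨p, hp, hpx⟩ => hne ⟨p, hp, hpx⟩)
  have h0 : γ.map f (f '' γ.support)ᶜ = 0 := by
    rw [Measure.map_apply hf.measurable hV.measurableSet]
    refine measure_mono_null ?_ (Measure.measure_compl_support (μ := γ))
    intro p hp hps
    exact hp ⟨p, hps, rfl⟩
  have h1 := h (f '' γ.support)ᶜ
  rw [h0, Measure.smul_apply, smul_eq_mul, nonpos_iff_eq_zero, mul_eq_zero] at h1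
  rcases h1 with h1 | h1
  · exact hε.ne' h1
  · exact hpos.ne' h1

lemma support_subset_graphs {n : ℕ} {μ ν : Measure (Euc n)} {γ : Measure (Euc n × Euc n)}
    {tp tm : Euc n → Euc n}
    (hsuit : SymmetricallySuitable n μ ν) (hcoup : IsCoupling n μ ν γ)
    (hGM : GangboMcCannMaps n γ tp tm) {p : Euc n × Euc n} (hp : p ∈ γ.support) :
    p.2 = tp p.1 ∨ p.2 = tm p.1 := by
  obtain ⟨hcp, _, hcm, _, hnull, _⟩ := hGM
  have hclosed : IsClosed ((fun x => (x, tp x)) '' unitSphere n ∪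
      (fun x => (x, tm x)) '' unitSphere n) :=
    (((isCompact_unitSphere n).image_of_continuousOn (continuousOn_id.prodMk hcp)).union
      ((isCompact_unitSphere n).image_of_continuousOn (continuousOn_id.prodMk hcm))).isClosed
  have hsub := Measure.support_subset_of_isClosed (μ := γ) hclosed ?_
  · rcases hsub hp with ⟨x, _, rfl⟩ | ⟨x, _, rfl⟩
    · exact Or.inl rfl
    · exact Or.inr rfl
  · have hnull' : ∀ᵐ p ∂γ, ¬ (p.2 ≠ tp p.1 ∧ p.2 ≠ tm p.1) := by
      rw [ae_iff]
      simpa using hnull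
    filter_upwards [ae_mem_spheres hsuit hcoup, hnull'] with q hq hq'
    rcases Classical.not_and_iff_not_or_not.1 hq' with h | h
    · exact Or.inl ⟨q.1, hq.1, Prod.ext rfl (not_not.1 h).symm⟩
    · exact Or.inr ⟨q.1, hq.1, Prod.ext rfl (not_not.1 h).symm⟩

/-- Over a bivalent point `x` the outer image lies in the support. Otherwise `(x, t⁻ x)` does, and
if `(x', t⁺ x)` is a point of the support, monotonicity of the two pairs reads
`0 ≤ λ ⟪x' - x, x⟫`, which forces `x' = x`. -/
lemma outer_mem_support {n : ℕ} {μ ν : Measure (Euc n)} {γ : Measure (Euc n × Euc n)}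
    {tp tm : Euc n → Euc n}
    (hsuit : SymmetricallySuitable n μ ν) (hopt : IsOptimalCoupling n μ ν γ)
    (hGM : GangboMcCannMaps n γ tp tm) {x : Euc n} (hx : x ∈ unitSphere n) (hne : tp x ≠ tm x) :
    (x, tp x) ∈ γ.support := by
  have hK := isCompact_support hsuit hopt.1
  have hfin := transportCost_ne_top hsuit hopt.1
  have hsub := support_subset hsuit hopt.1
  have hgr : ∀ p ∈ γ.support, p.2 = tp p.1 ∨ p.2 = tm p.1 :=
    fun p hp => support_subset_graphs hsuit hopt.1 hGM hp
  obtain ⟨_, _, ε, hε, _, hμ, _, hν, _⟩ := hsuit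
  obtain ⟨_, hbij, _, _, _, _, hbi⟩ := hGM
  obtain ⟨⟨l, hl, hlx⟩, _, _⟩ := hbi x hx hne
  obtain ⟨p, hp, hpx⟩ := exists_mem_support hK continuous_fst hε (by rwa [hopt.1.2.1]) hx
  rcases hgr p hp with h | h
  · rw [hpx] at h
    rwa [← hpx, ← h, hpx] at *
  · obtain ⟨q, hq, hqx⟩ := exists_mem_support hK continuous_snd hε (by rwa [hopt.1.2.2])
      (hbij.mapsTo hx)
    have hmono := support_monotone hopt hfin hq hp
    rw [hqx, h, hpx, hlx, inner_smul_right, inner_sub_left, real_inner_self_eq_norm_sq,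
      norm_of_mem_unitSphere hx] at hmono
    have hge : 1 ≤ ⟪q.1, x⟫ := by
      have := nonneg_of_mul_nonneg_right hmono hl
      linarith
    have hq1 : ‖q.1‖ = 1 := norm_of_mem_unitSphere (hsub hq).1
    have hle := real_inner_le_norm q.1 x
    rw [hq1, norm_of_mem_unitSphere hx] at hle
    have heq : q.1 = x := by
      rw [← inner_eq_one_iff_of_norm_eq_one (𝕜 := ℝ) hq1 (norm_of_mem_unitSphere hx)]
      linarith
    have : q = (x, tp x) := Prod.ext heq hqx
    rwa [this] at hq

/-! ### The Hölder estimate -/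

/-- From `D · (D² ρ)ⁿ⁻¹ ≲ ρⁿ` with `ρ² D = d` follows `D⁴ⁿ⁻¹ ≲ d`. -/
lemma pow_le_of_volume_bound {n : ℕ} (hn : 1 < n) {A B a b D d ρ : ℝ} (hA : 0 < A)
    (ha : 0 < a) (hb : 0 < b)
    (hD : 0 < D) (hρ : 0 < ρ) (hρd : ρ ^ 2 * D = d)
    (h : A * (D / a * (D ^ 2 * ρ / b) ^ (n - 1)) ≤ B * (17 * ρ) ^ n) :
    D ^ (4 * n - 1) ≤ (B * 17 ^ n * a * b ^ (n - 1) / A) ^ 2 * d := by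
  obtain ⟨k, rfl⟩ : ∃ k, n = k + 1 := ⟨n - 1, by lia⟩
  simp only [Nat.add_sub_cancel] at *
  have e1 : A * (D / a * (D ^ 2 * ρ / b) ^ k) = A / (a * b ^ k) * D ^ (2 * k + 1) * ρ ^ k := by
    rw [div_pow, mul_pow, ← pow_mul]
    field_simp
    ring
  have e2 : B * (17 * ρ) ^ (k + 1) = B * 17 ^ (k + 1) * ρ * ρ ^ k := by
    rw [mul_pow, pow_succ ρ]
    ring
  rw [e1, e2] at h
  have h1 := le_of_mul_le_mul_right h (by positivity)
  have h2 : D ^ (2 * k + 1) ≤ B * 17 ^ (k + 1) * a * b ^ k / A * ρ := by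
    rw [div_mul_eq_mul_div, div_le_iff₀ (by positivity)] at h1
    rw [div_mul_eq_mul_div, le_div_iff₀ hA]
    linarith
  have e3 : 4 * (k + 1) - 1 = (2 * k + 1) * 2 + 1 := by lia
  rw [e3, pow_succ, pow_mul, ← hρd]
  calc (D ^ (2 * k + 1)) ^ 2 * D ≤ (B * 17 ^ (k + 1) * a * b ^ k / A * ρ) ^ 2 * D := by gcongr
    _ = (B * 17 ^ (k + 1) * a * b ^ k / A) ^ 2 * (ρ ^ 2 * D) := by ring

set_option maxHeartbeats 2000000 in
/-- The Hölder estimate for two pairs in the support whose targets lie at height at least `c` over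
the hyperplane orthogonal to the midpoint direction `m` of the sources. -/
lemma pair_estimate {n : ℕ} (hn : 1 < n) {μ ν : Measure (Euc n)} {γ : Measure (Euc n × Euc n)}
    (hsuit : SymmetricallySuitable n μ ν) (hopt : IsOptimalCoupling n μ ν γ)
    {c : ℝ} (hc : 0 < c) :
    ∃ C : ℝ, 0 < C ∧ ∀ (x₀ x₁ y₀ y₁ m : Euc n) (s : ℝ),
      (x₀, y₀) ∈ γ.support → (x₁, y₁) ∈ γ.support → ‖m‖ = 1 → 0 < s →
      x₀ + x₁ = (2 * s) • m → c ≤ ⟪m, y₀⟫ → c ≤ ⟪m, y₁⟫ →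
      0 < ‖x₁ - x₀‖ → ‖x₁ - x₀‖ ≤ ‖y₁ - y₀‖ →
      ‖y₁ - y₀‖ ^ (4 * n - 1) ≤ C * ‖x₁ - x₀‖ := by
  have hK := isCompact_support hsuit hopt.1
  have hfin := transportCost_ne_top hsuit hopt.1
  have hsub := support_subset hsuit hopt.1
  obtain ⟨hpμ, _, ε, hε, hεt, hμl, hμu, hνl, _⟩ := hsuit
  have hσ : sphereMeasure n univ ≠ ⊤ := by
    intro htop
    have h1 := hμl univ
    rw [Measure.smul_apply, htop, smul_eq_mul, ENNReal.mul_top hε.ne', measure_univ] at h1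
    simp at h1
  obtain ⟨C₁, hC₁, hball⟩ := sphereMeasure_ball_le hσ
  have hA : 0 < ε.toReal := ENNReal.toReal_pos hε.ne' hεt
  have hn0 : (0 : ℝ) < n := by exact_mod_cast (by lia : 0 < n)
  refine ⟨(ε.toReal⁻¹ * C₁ * 17 ^ n * (2 * (1 + 1 / c)) * (16 * n) ^ (n - 1) / ε.toReal) ^ 2,
    by positivity, ?_⟩
  intro x₀ x₁ y₀ y₁ m s hp₀ hp₁ hm hs hsm hc₀ hc₁ hd0 hdD
  have hx₀ := norm_of_mem_unitSphere (hsub hp₀).1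
  have hx₁ := norm_of_mem_unitSphere (hsub hp₁).1
  have hy₀ := norm_of_mem_unitSphere (hsub hp₀).2
  have hy₁ := norm_of_mem_unitSphere (hsub hp₁).2
  simp only at hx₀ hx₁ hy₀ hy₁
  have hD0 : 0 < ‖y₁ - y₀‖ := hd0.trans_le hdD
  have hD2 : ‖y₁ - y₀‖ ≤ 2 := by
    have := norm_sub_le y₁ y₀
    rw [hy₀, hy₁] at this
    linarith
  set ρ := √(‖x₁ - x₀‖ / ‖y₁ - y₀‖) with hρ
  have hρ0 : 0 < ρ := Real.sqrt_pos.2 (by positivity)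
  have hρd : ρ ^ 2 * ‖y₁ - y₀‖ = ‖x₁ - x₀‖ := by
    rw [hρ, Real.sq_sqrt (by positivity), div_mul_cancel₀ _ hD0.ne']
  have hρ1 : ρ ≤ 1 := by
    rw [hρ, Real.sqrt_le_one, div_le_one hD0]
    exact hdD
  -- `F` is the set of targets reached from a source away from `m`; its complement receives mass
  -- only from sources near `m`.
  set F := Prod.snd '' (γ.support ∩ Prod.fst ⁻¹' (ball m (17 * ρ))ᶜ) with hF
  have hFc : IsCompact F :=
    (hK.inter_right (isOpen_ball.isClosed_compl.preimage continuous_fst)).image continuous_snd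
  have htube := tube_measure hn hc hm hy₀ hy₁ hc₀ hc₁ hD0 hρ0 hρ1 (N := Fᶜ) (by
    rintro θ h ζ y hθ0 hθ1 hζ hh hh2 hy1 hy ⟨⟨u, y'⟩, ⟨hsup, hu⟩, rfl⟩
    have hu1 := norm_of_mem_unitSphere (hsub hsup).1
    have hloc := localization hx₀ hx₁ hu1 hm hs hsm hθ0 hθ1 hD0 hD2 hdD hρ0.le hρd hh hh2 hζ hy
      (support_monotone hopt hfin hsup hp₀) (support_monotone hopt hfin hsup hp₁)
    refine hu ?_
    rw [mem_ball, dist_eq_norm]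
    simp only at hloc ⊢
    linarith)
  have hνμ : ν Fᶜ ≤ μ (ball m (17 * ρ)) := by
    rw [← hopt.1.2.1, ← hopt.1.2.2, Measure.map_apply measurable_snd hFc.measurableSet.compl,
      Measure.map_apply measurable_fst measurableSet_ball]
    refine measure_mono_ae ?_
    filter_upwards [Measure.support_mem_ae (μ := γ)] with p hp hpF
    by_contra hpb
    exact hpF ⟨p, ⟨hp, hpb⟩, rfl⟩
  have chain : ε * ENNReal.ofReal ((‖y₁ - y₀‖ / (2 * (1 + 1 / c)))
      * (‖y₁ - y₀‖ ^ 2 * ρ / (16 * n)) ^ (n - 1))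
      ≤ ε⁻¹ * ENNReal.ofReal (C₁ * (17 * ρ) ^ n) := by
    calc _ ≤ ε * sphereMeasure n Fᶜ := by gcongr
      _ ≤ ν Fᶜ := hνl _
      _ ≤ μ (ball m (17 * ρ)) := hνμ
      _ ≤ ε⁻¹ * sphereMeasure n (ball m (17 * ρ)) := hμu _
      _ ≤ _ := by
        gcongr
        exact hball m hm _ (by positivity)
  have chain' := ENNReal.toReal_mono
    (ENNReal.mul_ne_top (ENNReal.inv_ne_top.2 hε.ne') ENNReal.ofReal_ne_top) chain
  rw [ENNReal.toReal_mul, ENNReal.toReal_mul, ENNReal.toReal_ofReal (by positivity),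
    ENNReal.toReal_ofReal (by positivity), ENNReal.toReal_inv, ← mul_assoc ε.toReal⁻¹] at chain'
  exact pow_le_of_volume_bound hn hA (by positivity) (by positivity) hD0 hρ0 hρd
    chain'

/-- The outer optimal map `t⁺` is locally Hölder continuous with exponent
`1/(4n−1)` on the bivalent set `S₂ = {x ∈ Sⁿ : t⁺(x) ≠ t⁻(x)}`. -/
theorem tPlus_locallyHolder_on_S2 (n : ℕ) (hn : 1 < n)
    (μ ν : Measure (Euc n)) (γ : Measure (Euc n × Euc n))
    (tp tm : Euc n → Euc n)
    (hsuit : SymmetricallySuitable n μ ν)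
    (hopt : IsOptimalCoupling n μ ν γ)
    (hGM : GangboMcCannMaps n γ tp tm) :
    LocallyHolderOn n tp
      {x ∈ unitSphere n | tp x ≠ tm x}
      (1 / (4 * (n : ℝ) - 1)) := by
  rintro x ⟨hxS, hxne⟩
  obtain ⟨hcp, -, -, -, -, -, hbi⟩ := id hGM
  have hx1 := norm_of_mem_unitSphere hxS
  set κ := ⟪x, tp x⟫ with hκ
  have hκ0 : 0 < κ := (hbi x hxS hxne).2.1
  obtain ⟨η, hη0, hη⟩ := Metric.continuousOn_iff.1 hcp x hxS (κ / 4) (by positivity)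
  obtain ⟨C, hC, hpair⟩ := pair_estimate hn hsuit hopt (c := κ / 4) (by positivity)
  set r := min η (min (1 / 4) (κ / 12)) with hr
  have hr0 : 0 < r := by positivity
  have hrη : r ≤ η := min_le_left _ _
  have hr4 : r ≤ 1 / 4 := (min_le_right _ _).trans (min_le_left _ _)
  have hrκ : r ≤ κ / 12 := (min_le_right _ _).trans (min_le_right _ _)
  have hn1 : (1 : ℝ) < n := by exact_mod_cast hn
  set α : ℝ := 1 / (4 * (n : ℝ) - 1) with hα
  have hα0 : 0 < α := by
    rw [hα]
    exact one_div_pos.2 (by linarith)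
  have hα1 : α ≤ 1 := by
    rw [hα, div_le_one (by linarith)]
    linarith
  refine ⟨{z ∈ unitSphere n | tp z ≠ tm z} ∩ ball x r,
    inter_mem_nhdsWithin _ (ball_mem_nhds x hr0), inter_subset_left, max 1 (C ^ α), ?_⟩
  rintro x₀ ⟨⟨hx₀S, hx₀ne⟩, hx₀r⟩ x₁ ⟨⟨hx₁S, hx₁ne⟩, hx₁r⟩
  rw [mem_ball] at hx₀r hx₁r
  have hx₀1 := norm_of_mem_unitSphere hx₀S
  have hx₁1 := norm_of_mem_unitSphere hx₁S
  have hd0 : 0 ≤ ‖x₁ - x₀‖ := norm_nonneg _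
  have hd2 : ‖x₁ - x₀‖ < 2 * r := by
    rw [← dist_eq_norm]
    linarith [dist_triangle_right x₁ x₀ x]
  have hpow0 : 0 ≤ ‖x₁ - x₀‖ ^ α := Real.rpow_nonneg hd0 α
  rcases hd0.eq_or_lt with hd | hdpos
  · have : x₁ = x₀ := sub_eq_zero.1 (norm_eq_zero.1 hd.symm)
    rw [this, sub_self, norm_zero]
    positivity
  rcases le_total ‖tp x₁ - tp x₀‖ ‖x₁ - x₀‖ with hle | hle
  · have h1 : ‖x₁ - x₀‖ ≤ ‖x₁ - x₀‖ ^ α :=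
      Real.self_le_rpow_of_le_one hd0 (by linarith) hα1
    calc ‖tp x₁ - tp x₀‖ ≤ 1 * ‖x₁ - x₀‖ ^ α := by linarith
      _ ≤ max 1 (C ^ α) * ‖x₁ - x₀‖ ^ α := by gcongr; exact le_max_left _ _
  -- `m` is the direction of the midpoint `w` of `x₀` and `x₁`.
  set w : Euc n := (1 / 2 : ℝ) • (x₀ + x₁) with hw
  have hwx : ‖w - x‖ ≤ r := by
    have : w - x = (1 / 2 : ℝ) • ((x₀ - x) + (x₁ - x)) := by rw [hw]; module
    rw [this, norm_smul]
    have h1 := norm_add_le (x₀ - x) (x₁ - x)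
    rw [dist_eq_norm] at hx₀r hx₁r
    norm_num
    linarith
  set s := ‖w‖ with hs
  have hs1 : 1 - r ≤ s := by
    have := norm_sub_norm_le x w
    rw [hx1, norm_sub_rev] at this
    linarith
  have hs2 : s ≤ 1 + r := by
    have := norm_sub_norm_le w x
    rw [hx1] at this
    linarith
  have hs0 : 0 < s := by linarith
  set m : Euc n := s⁻¹ • w with hmdef
  have hm1 : ‖m‖ = 1 := by
    rw [hmdef, norm_smul, norm_inv, Real.norm_of_nonneg hs0.le, ← hs, inv_mul_cancel₀ hs0.ne']
  have hwm : w = s • m := by rw [hmdef, smul_smul, mul_inv_cancel₀ hs0.ne', one_smul]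
  have hsm : x₀ + x₁ = (2 * s) • m := by
    rw [mul_smul, ← hwm, hw, smul_smul]
    norm_num
  have hmx : ‖m - x‖ ≤ κ / 4 := by
    have h1 : m - x = (1 - s) • m + (w - x) := by rw [hwm]; module
    have h2 : |1 - s| ≤ r := by rw [abs_le]; constructor <;> linarith
    calc ‖m - x‖ ≤ ‖(1 - s) • m‖ + ‖w - x‖ := by rw [h1]; exact norm_add_le _ _
      _ = |1 - s| + ‖w - x‖ := by rw [norm_smul, hm1, mul_one, Real.norm_eq_abs]
      _ ≤ κ / 4 := by linarith
  have hheight : ∀ z ∈ unitSphere n, dist z x < r → tp z ∈ unitSphere n →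
      κ / 4 ≤ ⟪m, tp z⟫ := by
    intro z hz hzr hzS
    have h1 : ‖tp z - tp x‖ < κ / 4 := by
      rw [← dist_eq_norm]
      exact hη z hz (hzr.trans_le hrη)
    have e : ⟪m, tp z⟫ = κ + ⟪m - x, tp z⟫ + ⟪x, tp z - tp x⟫ := by
      rw [inner_sub_left, inner_sub_right, hκ]
      ring
    have h2 := abs_le.1 (abs_real_inner_le_norm (m - x) (tp z))
    have h3 := abs_le.1 (abs_real_inner_le_norm x (tp z - tp x))
    rw [norm_of_mem_unitSphere hzS, mul_one] at h2
    rw [hx1, one_mul] at h3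
    linarith [h2.1, h3.1]
  have hmaps := hGM.2.1.mapsTo
  have hmain := hpair x₀ x₁ (tp x₀) (tp x₁) m s
    (outer_mem_support hsuit hopt hGM hx₀S hx₀ne) (outer_mem_support hsuit hopt hGM hx₁S hx₁ne)
    hm1 hs0 hsm (hheight x₀ hx₀S hx₀r (hmaps hx₀S)) (hheight x₁ hx₁S hx₁r (hmaps hx₁S))
    hdpos hle
  have hexp : ((4 * n - 1 : ℕ) : ℝ) = 4 * (n : ℝ) - 1 := by
    rw [Nat.cast_sub (by lia)]
    push_cast
    ring
  have hroot : ‖tp x₁ - tp x₀‖ = (‖tp x₁ - tp x₀‖ ^ (4 * n - 1)) ^ α := by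
    rw [hα, ← hexp, one_div]
    exact (Real.pow_rpow_inv_natCast (norm_nonneg _) (by lia)).symm
  calc ‖tp x₁ - tp x₀‖ = (‖tp x₁ - tp x₀‖ ^ (4 * n - 1)) ^ α := hroot
    _ ≤ (C * ‖x₁ - x₀‖) ^ α := by gcongr
    _ = C ^ α * ‖x₁ - x₀‖ ^ α := Real.mul_rpow hC.le hd0
    _ ≤ max 1 (C ^ α) * ‖x₁ - x₀‖ ^ α := by gcongr; exact le_max_right _ _
end
end
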